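/- arXiv:1711.00886 — 2 statements merged into one kernel-verified Lean document; each statement's English description precedes it below -/
import Mathlib

section
/- Let G be a countably infinite discrete amenable group, X a compact metrizable space with compatible metric d, and α: G ↷ X a free continuous action. Fix μ ∈ M_G(X) and a positive integer n. For every finite subset F ⊆ G and every ε, η > 0, there is a castle {(T_k, cl(V_k)) : k = 1, …, K} such that for each k: V_k is open, T_k is (F,η)-invariant, diam(s·cl(V_k)) < η for all s ∈ T_k, the interval [|T_k|/(2n), |T_k|/n] contains an integer, and μ(⊔_{k=1}^K T_k·V_k) > 1 − ε. -/
open MeasureTheory Set Pointwise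

variable (G X : Type*)

section Defs

variable [Group G] [MetricSpace X] [MeasurableSpace X] [MulAction G X]

/-- A Borel probability measure is `G`-invariant. -/
def InvariantMeasure (μ : ProbabilityMeasure X) : Prop :=
  ∀ g : G, MeasureTheory.Measure.map (fun x => g • x) (μ : Measure X) = (μ : Measure X)

/-- `M_G(X)`: the set of `G`-invariant Borel probability measures on `X`. -/
def MG : Set (ProbabilityMeasure X) := {μ | InvariantMeasure G X μ}

/-- `E_G(X)`: the set of ergodic `G`-invariant Borel probability measures on `X`,
i.e. invariant measures giving every `G`-invariant Borel set measure `0` or `1`. -/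
def EG : Set (ProbabilityMeasure X) :=
  {μ | InvariantMeasure G X μ ∧
    ∀ A : Set X, MeasurableSet A → (∀ g : G, g • A = A) → μ A = 0 ∨ μ A = 1}

/-- The action of `G` on `X` is free. -/
def FreeAction : Prop := ∀ (g : G) (x : X), g • x = x → g = 1

/-- The action of `G` on `X` is minimal: there is no proper nonempty closed invariant subset. -/
def MinimalAction : Prop :=
  ∀ C : Set X, IsClosed C → (∀ g : G, g • C ⊆ C) → C = ∅ ∨ C = Set.univ

/-- The small boundary property. -/
def SmallBoundaryProperty : Prop :=
  ∀ (x : X) (U : Set X), IsOpen U → x ∈ U →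
    ∃ V : Set X, IsOpen V ∧ x ∈ V ∧ V ⊆ U ∧ ∀ μ ∈ MG G X, μ (frontier V) = 0

/-- `S` is a `(K,δ)`-invariant finite subset of `G`. -/
def FolnerInv (K : Finset G) (δ : ℝ) (S : Finset G) : Prop :=
  (1 - δ) * (S.card : ℝ) ≤ ({s | s ∈ S ∧ ∀ k ∈ K, k * s ∈ S} : Set G).ncard

/-- `G` is amenable: it admits `(K,δ)`-invariant nonempty finite subsets for all `K, δ`. -/
def AmenableGroup : Prop :=
  ∀ (K : Finset G) (δ : ℝ), 0 < δ → ∃ S : Finset G, S.Nonempty ∧ FolnerInv G K δ S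

/-- `(S, V)` is a tower: the translates `s • V`, `s ∈ S`, are pairwise disjoint. -/
def IsTower (S : Finset G) (V : Set X) : Prop :=
  (S : Set G).Pairwise fun s t => Disjoint (s • V) (t • V)

/-- `F ≺_m O`: subordination with `m`-colored multiplicity. -/
def SubordinateM (m : ℕ) (F O : Set X) : Prop :=
  ∃ (n : ℕ) (U : Fin n → Set X) (s : Fin n → G) (c : Fin n → Fin (m + 1)),
    (∀ k, IsOpen (U k)) ∧ F ⊆ ⋃ k, U k ∧ (∀ k, s k • U k ⊆ O) ∧
    ∀ k l, k ≠ l → c k = c l → Disjoint (s k • U k) (s l • U l)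

/-- The action has dynamical `m`-comparison. -/
def HasMComparison (m : ℕ) : Prop :=
  ∀ F O : Set X, IsClosed F → IsOpen O →
    (∀ μ ∈ MG G X, μ F < μ O) → SubordinateM G X m F O

/-- The action is `m`-almost finite. -/
def MAlmostFinite (m : ℕ) : Prop :=
  ∀ (n : ℕ), 1 ≤ n → ∀ (K : Finset G) (δ : ℝ), 0 < δ →
    ∃ (I : ℕ) (S : Fin I → Finset G) (V : Fin I → Set X) (c : Fin I → Fin (m + 1))
      (S' : Fin I → Finset G),
      (∀ i, IsOpen (V i)) ∧
      (∀ i, IsTower G X (S i) (closure (V i))) ∧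
      (∀ i, FolnerInv G K δ (S i)) ∧
      (∀ i, ∀ s ∈ S i, Metric.diam (s • closure (V i)) < δ) ∧
      (∀ i j, i ≠ j → c i = c j →
        Disjoint ((S i : Set G) • closure (V i)) ((S j : Set G) • closure (V j))) ∧
      (∀ i, S' i ⊆ S i) ∧ (∀ i, ((S' i).card : ℝ) ≤ (S i).card / n) ∧
      SubordinateM G X 0 (Set.univ \ ⋃ i, (S i : Set G) • V i) (⋃ i, (S' i : Set G) • V i)

end Defs


theorem aux_cover {G X : Type*} [Group G] 
    [MetricSpace X] [CompactSpace X]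
    [MulAction G X] [ContinuousConstSMul G X]
    (hfree : FreeAction G X) (T : Finset G) (η : ℝ) (hη : 0 < η) (x : X) :
    ∃ U : Set X, IsOpen U ∧ x ∈ U ∧ (∀ s ∈ T, Metric.diam (s • U) < η) ∧ IsTower G X T U := by
  have h1 : ∀ s : G, ∀ᶠ r in nhdsWithin (0:ℝ) (Ioi 0), Metric.diam (s • Metric.ball x r) < η := by
    intro s
    have : Metric.ball (s • x) (η/3) ∈ nhds (s • x) := Metric.ball_mem_nhds _ (by positivity)
    have h2 := (continuous_const_smul s (T := X)).continuousAt.preimage_mem_nhds this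
    obtain ⟨r, hr, hsub⟩ := Metric.mem_nhds_iff.1 h2
    filter_upwards [Ioo_mem_nhdsGT hr] with q hq
    have h3 : s • Metric.ball x q ⊆ Metric.ball (s • x) (η/3) := by
      rintro _ ⟨y, hy, rfl⟩
      exact hsub (Metric.ball_subset_ball hq.2.le hy)
    calc _ ≤ Metric.diam (Metric.ball (s • x) (η/3)) := Metric.diam_mono h3 Metric.isBounded_ball
      _ ≤ 2 * (η/3) := Metric.diam_ball (by positivity)
      _ < η := by linarith
  have h2 : ∀ s t : G, s ≠ t → ∀ᶠ r in nhdsWithin (0:ℝ) (Ioi 0),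
      Disjoint (s • Metric.ball x r) (t • Metric.ball x r) := by
    intro s t hst
    have hne : s • x ≠ t • x := by
      intro h
      apply hst
      have := hfree (t⁻¹ * s) x (by rw [mul_smul, h, inv_smul_smul])
      rw [inv_mul_eq_one] at this
      exact this.symm
    obtain ⟨O1, O2, ho1, ho2, hx1, hx2, hd⟩ := t2_separation hne
    have a1 := (continuous_const_smul s (T := X)).continuousAt.preimage_mem_nhds (ho1.mem_nhds hx1)
    have a2 := (continuous_const_smul t (T := X)).continuousAt.preimage_mem_nhds (ho2.mem_nhds hx2)
    obtain ⟨r, hr, hsub⟩ := Metric.mem_nhds_iff.1 (Filter.inter_mem a1 a2)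
    filter_upwards [Ioo_mem_nhdsGT hr] with q hq
    refine hd.mono ?_ ?_
    · rintro _ ⟨y, hy, rfl⟩
      exact (hsub (Metric.ball_subset_ball hq.2.le hy)).1
    · rintro _ ⟨y, hy, rfl⟩
      exact (hsub (Metric.ball_subset_ball hq.2.le hy)).2
  have h3 : ∀ᶠ r in nhdsWithin (0:ℝ) (Ioi 0), ∀ s ∈ T, Metric.diam (s • Metric.ball x r) < η := by
    rw [Filter.eventually_all_finset]
    intro s _; exact h1 s
  have h4 : ∀ᶠ r in nhdsWithin (0:ℝ) (Ioi 0), ∀ s ∈ T, ∀ t ∈ T, s ≠ t → 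
      Disjoint (s • Metric.ball x r) (t • Metric.ball x r) := by
    rw [Filter.eventually_all_finset]
    intro s _
    rw [Filter.eventually_all_finset]
    intro t _
    by_cases hst : s = t
    · simp [hst]
    · filter_upwards [h2 s t hst] with q hq _ using hq
  obtain ⟨r, hr3, hr4, hr0⟩ := (h3.and (h4.and self_mem_nhdsWithin)).exists
  refine ⟨Metric.ball x r, Metric.isOpen_ball, Metric.mem_ball_self hr0, hr3, ?_⟩
  intro s hs t ht hst
  exact hr4 s hs t ht hst

theorem aux_tower_le {G X : Type*} [Group G] 
    [MeasurableSpace X]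
    [MulAction G X] (m : Measure X) [IsProbabilityMeasure m] [MeasurableConstSMul G X]
    [SMulInvariantMeasure G X m] (S : Finset G) (W : Set X) :
    m.real ((S : Set G) • W) ≤ S.card * m.real W := by
  rw [← Set.iUnion_smul_set]
  have := measureReal_biUnion_finset_le (μ := m) S (fun s => s • W)
  refine (le_trans ?_ this).trans ?_
  · simp
  · simp [measureReal_def, measure_smul]

theorem aux_tower_eq {G X : Type*} [Group G] 
    [MeasurableSpace X]
    [MulAction G X] (m : Measure X) [IsProbabilityMeasure m] [MeasurableConstSMul G X]
    [SMulInvariantMeasure G X m] (S : Finset G) (W : Set X) (hW : MeasurableSet W)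
    (hd : (S : Set G).Pairwise fun s t => Disjoint (s • W) (t • W)) :
    m.real ((S : Set G) • W) = S.card * m.real W := by
  rw [← Set.iUnion_smul_set]
  have := measureReal_biUnion_finset (μ := m) (s := S) (f := fun s => s • W) hd
    (fun s _ => hW.const_smul s)
  simp only [Finset.mem_coe]
  rw [this]
  simp [measureReal_def, measure_smul]

open Classical in
theorem aux_P {G X : Type*} [Group G] 
    [MeasurableSpace X]
    [MulAction G X] (m : Measure X) [IsProbabilityMeasure m] [MeasurableConstSMul G X]
    [SMulInvariantMeasure G X m] (T : Finset G) (hT : T.Nonempty) (B : Set X) (hB : MeasurableSet B)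
    (ε : ℝ) (hε0 : 0 < ε) (hε : ε ≤ m.real B) :
    ε / 2 ≤ m.real {x | ε / 2 * T.card ≤ ((T.filter fun t => t • x ∈ B).card : ℝ)} := by
  set h : X → ℝ := fun x => ∑ t ∈ T, ((fun x => t • x) ⁻¹' B).indicator (fun _ => (1:ℝ)) x with hh
  have hcard : ∀ x, ((T.filter fun t => t • x ∈ B).card : ℝ) = h x := by
    intro x
    simp [hh, Set.indicator_apply]
  have hmB : ∀ t : G, MeasurableSet ((fun x => t • x) ⁻¹' B) :=
    fun t => measurable_const_smul t hB
  have hmeas : Measurable h := by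
    refine Finset.measurable_sum _ fun t _ => measurable_const.indicator (hmB t)
  simp_rw [hcard]
  set P := {x | ε / 2 * T.card ≤ h x} with hP
  have hPm : MeasurableSet P := measurableSet_le measurable_const hmeas
  have hIntg : ∀ t ∈ T, Integrable (((fun x => t • x) ⁻¹' B).indicator (fun _ => (1:ℝ))) m :=
    fun t _ => (integrable_const _).indicator (hmB t)
  have hI : ∫ x, h x ∂m = T.card * m.real B := by
    simp only [hh]
    rw [integral_finsetSum _ hIntg]
    have : ∀ t ∈ T, ∫ x, ((fun x => t • x) ⁻¹' B).indicator (fun _ => (1:ℝ)) x ∂m = m.real B := by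
      intro t _
      rw [integral_indicator_const _ (hmB t)]
      simp [measureReal_def, measure_preimage_smul]
    rw [Finset.sum_congr rfl this]
    simp
  have hle : ∀ x, h x ≤ P.indicator (fun _ => (T.card : ℝ)) x + ε / 2 * T.card := by
    intro x
    have hTle : h x ≤ T.card := by
      rw [← hcard]; exact_mod_cast Finset.card_filter_le _ _
    have h0 : 0 ≤ h x := by rw [← hcard]; positivity
    by_cases hx : x ∈ P
    · rw [Set.indicator_of_mem hx]
      have : 0 ≤ ε / 2 * T.card := by positivity
      linarith
    · rw [Set.indicator_of_notMem hx]
      have : ¬ (ε / 2 * T.card ≤ h x) := hx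
      linarith
  have hJ : ∫ x, h x ∂m ≤ ∫ x, (P.indicator (fun _ => (T.card : ℝ)) x + ε / 2 * T.card) ∂m := by
    apply integral_mono (integrable_finsetSum _ hIntg) _ hle
    exact ((integrable_const _).indicator hPm).add (integrable_const _)
  rw [hI, integral_add ((integrable_const _).indicator hPm) (integrable_const _),
    integral_indicator_const _ hPm] at hJ
  simp at hJ
  have hTp : (0:ℝ) < T.card := by exact_mod_cast hT.card_pos
  have : ε / 2 * T.card ≤ m.real P * T.card := by nlinarith
  exact le_of_mul_le_mul_right this hTp

open Classical in
theorem aux_pick {G X : Type*} [Group G] [MetricSpace X] [CompactSpace X]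
    [MeasurableSpace X] [BorelSpace X] [MulAction G X] [ContinuousConstSMul G X]
    (hfree : FreeAction G X)
    (m : Measure X) [IsProbabilityMeasure m]
    [SMulInvariantMeasure G X m] (T : Finset G) (hT : T.Nonempty)
    (ε η : ℝ) (hε0 : 0 < ε) (hη : 0 < η) :
    ∃ c : ℝ, 0 < c ∧ ∀ B : Set X, MeasurableSet B → ε ≤ m.real B →
      ∃ (T' : Finset G) (U W : Set X), T' ⊆ T ∧ IsOpen U ∧ IsCompact W ∧ W ⊆ U ∧
        (∀ s ∈ T, Metric.diam (s • U) < η) ∧ IsTower G X T U ∧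
        ε / 2 * T.card ≤ (T'.card : ℝ) ∧ (∀ w ∈ W, ∀ t ∈ T, t ∈ T' ↔ t • w ∈ B) ∧
        c ≤ m.real W := by
  choose U hUo hUx hUd hUt using aux_cover hfree T η hη
  obtain ⟨I, -, hI⟩ := isCompact_univ.elim_nhds_subcover U (fun x _ => (hUo x).mem_nhds (hUx x))
  set N : ℝ := (((I ×ˢ T.powerset).card : ℕ) : ℝ) with hN
  refine ⟨ε / 4 / (N + 1), by positivity, fun B hB hεB => ?_⟩
  have hP := aux_P m T hT B hB ε hε0 hεB
  set P := {x | ε / 2 * T.card ≤ ((T.filter fun t => t • x ∈ B).card : ℝ)} with hPdef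
  set pat : X → Finset G := fun x => T.filter fun t => t • x ∈ B with hpat
  set D : X × Finset G → Set X := fun p => U p.1 ∩ {x | x ∈ P ∧ pat x = p.2} with hD
  have hpatm : ∀ S : Finset G, S ⊆ T → MeasurableSet {x | pat x = S} := by
    intro S hS
    have : {x | pat x = S} = ⋂ t ∈ T, {x | t • x ∈ B ↔ t ∈ S} := by
      ext x
      simp only [hpat, mem_ofPred_eq, mem_iInter, Finset.ext_iff, Finset.mem_filter]
      constructor
      · intro h t ht
        rw [← h t]; simp [ht]
      · intro h t
        constructor
        · rintro ⟨h1, h2⟩; exact (h t h1).1 h2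
        · intro h1; exact ⟨hS h1, (h t (hS h1)).2 h1⟩
    rw [this]
    refine Finset.measurableSet_biInter _ fun t _ => ?_
    have hm : MeasurableSet {x | t • x ∈ B} := measurable_const_smul t hB
    by_cases h : t ∈ S
    · simpa [h] using hm
    · have : {x | t • x ∈ B ↔ t ∈ S} = {x | t • x ∈ B}ᶜ := by
        ext x; simp [h]
      rw [this]; exact hm.compl
  have hDm : ∀ p ∈ I ×ˢ T.powerset, MeasurableSet (D p) := by
    rintro ⟨x, S⟩ hp
    simp only [Finset.mem_product, Finset.mem_powerset] at hp
    refine (hUo x).measurableSet.inter ?_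
    by_cases h : ε / 2 * T.card ≤ (S.card : ℝ)
    · convert hpatm S hp.2 using 1
      ext y
      simp only [mem_ofPred_eq, hPdef]
      constructor
      · exact fun h => h.2
      · intro hy; refine ⟨?_, hy⟩
        change ε / 2 * T.card ≤ ((pat y).card : ℝ)
        rw [hy]; exact h
    · convert MeasurableSet.empty using 1
      ext y
      simp only [mem_ofPred_eq, hPdef, mem_empty_iff_false, iff_false, not_and]
      rintro h1 h2
      apply h
      rw [← h2]; exact h1
  have hcov : P ⊆ ⋃ p ∈ I ×ˢ T.powerset, D p := by
    intro x hx
    have := hI (mem_univ x)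
    simp only [mem_iUnion] at this ⊢
    obtain ⟨y, hy, hxy⟩ := this
    exact ⟨(y, pat x), by simp [hy, hpat], hxy, hx, rfl⟩
  have h1 : m.real P ≤ ∑ p ∈ I ×ˢ T.powerset, m.real (D p) :=
    (measureReal_mono hcov (measure_ne_top _ _)).trans (measureReal_biUnion_finset_le _ _)
  obtain ⟨p, hp, hpD⟩ : ∃ p ∈ I ×ˢ T.powerset, ε / 2 / (N + 1) ≤ m.real (D p) := by
    by_contra! hcon
    have h2 : ∑ p ∈ I ×ˢ T.powerset, m.real (D p) ≤ N * (ε / 2 / (N+1)) := by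
      refine (Finset.sum_le_sum fun p hp => (hcon p hp).le).trans ?_
      simp [hN]
    have h3 : N * (ε / 2 / (N+1)) < ε / 2 := by
      have : 0 ≤ N := by positivity
      rw [← mul_div_assoc, div_lt_iff₀ (by positivity)]
      nlinarith
    linarith
  have hpos : ε / 4 / (N + 1) < m.real (D p) := by
    refine lt_of_lt_of_le ?_ hpD
    gcongr
    linarith
  obtain ⟨W, hWD, hWc, hW⟩ := (hDm p hp).exists_lt_isCompact
    (μ := m) (r := ENNReal.ofReal (ε / 4 / (N + 1))) (by
      rw [ENNReal.ofReal_lt_iff_lt_toReal (by positivity) (measure_ne_top _ _)]; exact hpos)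
  have hW' : ε / 4 / (N + 1) ≤ m.real W := by
    rw [ENNReal.ofReal_lt_iff_lt_toReal (by positivity) (measure_ne_top _ _)] at hW
    exact hW.le
  simp only [Finset.mem_product, Finset.mem_powerset] at hp
  have hne : W.Nonempty := by
    by_contra hne
    rw [not_nonempty_iff_eq_empty] at hne
    have : 0 < ε / 4 / (N + 1) := by positivity
    simp [hne] at hW'
    linarith
  refine ⟨p.2, U p.1, W, hp.2, hUo _, hWc, fun w hw => (hWD hw).1, hUd _, hUt _, ?_, ?_, hW'⟩
  · obtain ⟨w, hw⟩ := hne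
    obtain ⟨-, h2, h3⟩ := hWD hw
    rw [← h3]; exact h2
  · intro w hw t ht
    obtain ⟨-, h2, h3⟩ := hWD hw
    rw [← h3]; simp [hpat, ht]

/-- union of a castle -/
def cUnion {G X : Type*} [Group G] [MulAction G X] {K : ℕ} (T : Fin K → Finset G)
    (V : Fin K → Set X) : Set X := ⋃ k, (T k : Set G) • V k

/-- points of the castle that stay in their tile under `f` -/
def cGood {G X : Type*} [Group G] [MulAction G X] {K : ℕ} (T : Fin K → Finset G)
    (V : Fin K → Set X) (f : G) : Set X := ⋃ k, ({s | s ∈ T k ∧ f * s ∈ T k} : Set G) • V k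

/-- the set of `f`-edges cut by the castle -/
def cCut {G X : Type*} [Group G] [MulAction G X] {K : ℕ} (T : Fin K → Finset G)
    (V : Fin K → Set X) (f : G) : Set X :=
  (cUnion T V ∪ (fun x => f • x) ⁻¹' cUnion T V) \ cGood T V f

/-- the inductive invariant -/
structure CastleInv {G X : Type*} [Group G] [MetricSpace X] [MulAction G X] [MeasurableSpace X]
    (m : Measure X) (F : Finset G) (δ η : ℝ)
    {K : ℕ} (T : Fin K → Finset G) (V : Fin K → Set X) : Prop where
  cpt : ∀ k, IsCompact (V k)
  opn : ∀ k, ∃ U, IsOpen U ∧ V k ⊆ U ∧ (∀ s ∈ T k, Metric.diam (s • U) < η) ∧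
    IsTower G X (T k) U
  dis : ∀ k l, k ≠ l → Disjoint ((T k : Set G) • V k) ((T l : Set G) • V l)
  cut : ∑ f ∈ F, m.real (cCut T V f) ≤ δ * m.real (cUnion T V)

theorem cUnion_cons {G X : Type*} [Group G] [MulAction G X] {K : ℕ} (T : Fin K → Finset G)
    (V : Fin K → Set X) (S : Finset G) (W : Set X) :
    cUnion (Fin.cons S T : Fin (K+1) → Finset G) (Fin.cons W V : Fin (K+1) → Set X)
      = (S : Set G) • W ∪ cUnion T V := by
  ext x
  simp [cUnion, Fin.exists_fin_succ]

theorem cGood_cons {G X : Type*} [Group G] [MulAction G X] {K : ℕ} (T : Fin K → Finset G)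
    (V : Fin K → Set X) (S : Finset G) (W : Set X) (f : G) :
    cGood (Fin.cons S T : Fin (K+1) → Finset G) (Fin.cons W V : Fin (K+1) → Set X) f
      = ({s | s ∈ S ∧ f * s ∈ S} : Set G) • W ∪ cGood T V f := by
  ext x
  simp [cGood, Fin.exists_fin_succ]

theorem cUnion_compact {G X : Type*} [Group G] [MetricSpace X] [MulAction G X]
    [ContinuousConstSMul G X] {K : ℕ} (T : Fin K → Finset G)
    (V : Fin K → Set X) (h : ∀ k, IsCompact (V k)) : IsCompact (cUnion T V) := by
  refine isCompact_iUnion fun k => ?_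
  rw [← Set.iUnion_smul_set]
  exact (T k).isCompact_biUnion fun s _ => (h k).smul s

theorem folner_bad {G : Type*} [Group G] [DecidableEq G] (K : Finset G) (δ : ℝ) (S : Finset G)
    (h : FolnerInv G K δ S) (f : G) (hf : f ∈ K) :
    ((S.filter fun s => f * s ∉ S).card : ℝ) ≤ δ * S.card := by
  unfold FolnerInv at h
  have h1 : ({s | s ∈ S ∧ ∀ k ∈ K, k * s ∈ S} : Set G).ncard
      ≤ (S.filter fun s => f * s ∈ S).card := by
    rw [← Set.ncard_coe_finset]
    apply Set.ncard_le_ncard _ (Finset.finite_toSet _)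
    intro s hs
    simp only [Finset.coe_filter]
    exact ⟨hs.1, hs.2 f hf⟩
  have h2 := Finset.card_filter_add_card_filter_not (s := S) (fun s => f * s ∈ S)
  have h1' : (({s | s ∈ S ∧ ∀ k ∈ K, k * s ∈ S} : Set G).ncard : ℝ)
      ≤ (S.filter fun s => f * s ∈ S).card := by exact_mod_cast h1
  have h2' : ((S.filter fun s => f * s ∈ S).card : ℝ) + (S.filter fun s => f * s ∉ S).card
      = S.card := by exact_mod_cast h2
  linarith

open Classical in
theorem aux_step {G X : Type*} [Group G] [MetricSpace X] [CompactSpace X]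
    [MeasurableSpace X] [BorelSpace X] [MulAction G X] [ContinuousConstSMul G X]
    (m : Measure X) [IsProbabilityMeasure m]
    [SMulInvariantMeasure G X m] (F : Finset G) (δ δ' η ε c : ℝ)
    (hδ0 : 0 < δ) (hδ : 2 * F.card * δ' ≤ δ * (ε / 2)) (hε0 : 0 < ε) (hc : 0 < c)
    (T₀ : Finset G) (hT₀ : T₀.Nonempty)
    (hF : ∀ f ∈ F, ((T₀.filter fun s => f * s ∉ T₀).card : ℝ) ≤ δ' * T₀.card)
    (hF' : ∀ f ∈ F, ((T₀.filter fun s => f⁻¹ * s ∉ T₀).card : ℝ) ≤ δ' * T₀.card)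
    {K : ℕ} (T : Fin K → Finset G) (V : Fin K → Set X) (h : CastleInv m F δ η T V)
    (T' : Finset G) (U W : Set X) (hT' : T' ⊆ T₀) (hU : IsOpen U) (hW : IsCompact W) (hWU : W ⊆ U)
    (hdiam : ∀ s ∈ T₀, Metric.diam (s • U) < η) (htow : IsTower G X T₀ U)
    (hcard : ε / 2 * T₀.card ≤ (T'.card : ℝ))
    (hpat : ∀ w ∈ W, ∀ t ∈ T₀, t ∈ T' ↔ t • w ∈ (cUnion T V)ᶜ)
    (hcW : c ≤ m.real W) :
    CastleInv m F δ η (Fin.cons T' T : Fin (K+1) → Finset G) (Fin.cons W V : Fin (K+1) → Set X) ∧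
    m.real (cUnion T V) + c ≤
      m.real (cUnion (Fin.cons T' T : Fin (K+1) → Finset G) (Fin.cons W V : Fin (K+1) → Set X)) := by
  have hCdis : Disjoint ((T' : Set G) • W) (cUnion T V) := by
    rw [Set.disjoint_left]
    rintro _ ⟨t, ht, w, hw, rfl⟩
    exact (hpat w hw t (hT' ht)).1 ht
  have hT'tow : IsTower G X T' U := fun s hs t ht hst => htow (hT' hs) (hT' ht) hst
  have hCm : m.real ((T' : Set G) • W) = T'.card * m.real W :=
    aux_tower_eq m T' W hW.measurableSet fun s hs t ht hst =>
      (hT'tow hs ht hst).mono (smul_set_mono hWU) (smul_set_mono hWU)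
  have hAm : MeasurableSet (cUnion T V) := (cUnion_compact T V h.cpt).measurableSet
  have hU' : m.real ((T' : Set G) • W ∪ cUnion T V) = T'.card * m.real W + m.real (cUnion T V) := by
    rw [measureReal_union hCdis hAm, hCm]
  have hTpos : (0:ℝ) < T₀.card := by exact_mod_cast hT₀.card_pos
  have hT'pos : (1:ℝ) ≤ T'.card := by
    have : (0:ℝ) < T'.card := lt_of_lt_of_le (by positivity) hcard
    exact_mod_cast this
  refine ⟨⟨?_, ?_, ?_, ?_⟩, ?_⟩
  · intro k
    refine Fin.cases ?_ (fun k => ?_) k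
    · simpa using hW
    · simpa using h.cpt k
  · intro k
    refine Fin.cases ?_ (fun k => ?_) k
    · exact ⟨U, hU, hWU, fun s hs => hdiam s (hT' hs), hT'tow⟩
    · simpa using h.opn k
  · have hsub : ∀ k, (T k : Set G) • V k ⊆ cUnion T V := fun k => subset_iUnion (fun k => (T k : Set G) • V k) k
    intro k l
    refine Fin.cases ?_ (fun k => ?_) k
    · refine Fin.cases ?_ (fun l => ?_) l
      · simp
      · intro _
        simpa using hCdis.mono_right (hsub l)
    · refine Fin.cases ?_ (fun l => ?_) l
      · intro _
        simpa using (hCdis.mono_right (hsub k)).symm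
      · intro hkl
        simpa using h.dis k l (fun e => hkl (by rw [e]))
  · rw [cUnion_cons, hU']
    have key : ∀ f ∈ F, m.real (cCut (Fin.cons T' T : Fin (K+1) → Finset G)
        (Fin.cons W V : Fin (K+1) → Set X) f) ≤ m.real (cCut T V f) + 2 * δ' * T₀.card * m.real W := by
      intro f hf
      set b1 := T₀.filter fun s => f * s ∉ T₀ with hb1
      set b2 := (T₀.filter fun s => f⁻¹ * s ∉ T₀).image (fun s => f⁻¹ * s) with hb2
      have hsub : cCut (Fin.cons T' T : Fin (K+1) → Finset G)
          (Fin.cons W V : Fin (K+1) → Set X) f ⊆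
          cCut T V f ∪ ((b1 : Set G) • W ∪ (b2 : Set G) • W) := by
        rintro x ⟨hx1, hx2⟩
        rw [cGood_cons] at hx2
        rw [cUnion_cons] at hx1
        by_contra hcon
        simp only [mem_union, not_or] at hcon hx2
        obtain ⟨hc0, hc1, hc2⟩ := hcon
        have hnA : x ∉ cUnion T V := fun hx => hc0 ⟨Or.inl hx, hx2.2⟩
        have hnfA : f • x ∉ cUnion T V := fun hx => hc0 ⟨Or.inr hx, hx2.2⟩
        rcases hx1 with (hx | hx) | (hx | hx)
        · obtain ⟨t, ht, w, hw, rfl⟩ := hx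
          simp only at hnA hnfA hc1 hx2
          have hft : f * t ∈ T₀ := by
            by_contra hft
            apply hc1
            refine ⟨t, ?_, w, hw, rfl⟩
            simp only [hb1, Finset.coe_filter]
            exact ⟨hT' ht, hft⟩
          have : f * t ∈ T' := by
            rw [hpat w hw _ hft, mul_smul]; exact hnfA
          exact hx2.1 ⟨t, ⟨ht, this⟩, w, hw, rfl⟩
        · exact hnA hx
        · obtain ⟨t, ht, w, hw, hxe⟩ := hx
          have hxe' : x = (f⁻¹ * t) • w := by
            rw [mul_smul]
            have : t • w = f • x := hxe
            rw [this, inv_smul_smul]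
          have hft : f⁻¹ * t ∈ T₀ := by
            by_contra hft
            apply hc2
            refine ⟨f⁻¹ * t, ?_, w, hw, hxe'.symm⟩
            rw [hb2, Finset.mem_coe, Finset.mem_image]
            exact ⟨t, Finset.mem_filter.2 ⟨hT' ht, hft⟩, rfl⟩
          have : f⁻¹ * t ∈ T' := by
            rw [hpat w hw _ hft, ← hxe']; exact hnA
          refine hx2.1 ⟨f⁻¹ * t, ⟨this, ?_⟩, w, hw, hxe'.symm⟩
          simpa using ht
        · exact hnfA hx
      have e1 := aux_tower_le m b1 W
      have e2 := aux_tower_le m b2 W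
      have c1 := hF f hf
      have c2 : (b2.card : ℝ) ≤ δ' * T₀.card := by
        refine le_trans ?_ (hF' f hf)
        exact_mod_cast Finset.card_image_le
      have hW0 : 0 ≤ m.real W := measureReal_nonneg
      have e3 := measureReal_union_le (μ := m) ((b1 : Set G) • W) ((b2 : Set G) • W)
      have e4 := measureReal_union_le (μ := m) (cCut T V f) ((b1 : Set G) • W ∪ (b2 : Set G) • W)
      have e5 := measureReal_mono (μ := m) hsub
      have e6 := mul_le_mul_of_nonneg_right c1 hW0
      have e7 := mul_le_mul_of_nonneg_right c2 hW0
      linarith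
    refine (Finset.sum_le_sum key).trans ?_
    rw [Finset.sum_add_distrib, Finset.sum_const, nsmul_eq_mul]
    have h1 := h.cut
    have hW0 : 0 ≤ m.real W := measureReal_nonneg
    have h2 : (F.card : ℝ) * (2 * δ' * T₀.card * m.real W) ≤ δ * (T'.card * m.real W) := by
      calc _ = (2 * F.card * δ') * (T₀.card * m.real W) := by ring
        _ ≤ (δ * (ε / 2)) * (T₀.card * m.real W) := by gcongr
        _ = δ * ((ε / 2 * T₀.card) * m.real W) := by ring
        _ ≤ _ := by gcongr
    linarith
  · rw [cUnion_cons, hU']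
    have hW0 : 0 ≤ m.real W := measureReal_nonneg
    nlinarith

theorem aux_castle {G X : Type*} [Group G] [MetricSpace X] [CompactSpace X]
    [MeasurableSpace X] [BorelSpace X] [MulAction G X] [ContinuousConstSMul G X]
    (hG : AmenableGroup G) (hfree : FreeAction G X)
    (m : Measure X) [IsProbabilityMeasure m]
    [SMulInvariantMeasure G X m] (F : Finset G) (δ η ε : ℝ)
    (hδ : 0 < δ) (hε : 0 < ε) (hη : 0 < η) :
    ∃ (K : ℕ) (T : Fin K → Finset G) (V : Fin K → Set X), CastleInv m F δ η T V ∧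
      1 - ε < m.real (cUnion T V) := by
  classical
  set δ' := δ * (ε / 2) / (2 * F.card + 1) with hδ'
  have hδ'0 : 0 < δ' := by positivity
  have hδ'1 : 2 * F.card * δ' ≤ δ * (ε / 2) := by
    rw [hδ', ← mul_div_assoc, div_le_iff₀ (by positivity)]
    have : 0 < δ * (ε / 2) := by positivity
    nlinarith
  obtain ⟨T₀, hT₀, hfol⟩ := hG (F ∪ F⁻¹) δ' hδ'0
  have hF : ∀ f ∈ F, ((T₀.filter fun s => f * s ∉ T₀).card : ℝ) ≤ δ' * T₀.card :=
    fun f hf => folner_bad _ _ _ hfol f (Finset.mem_union_left _ hf)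
  have hF' : ∀ f ∈ F, ((T₀.filter fun s => f⁻¹ * s ∉ T₀).card : ℝ) ≤ δ' * T₀.card :=
    fun f hf => folner_bad _ _ _ hfol f⁻¹ (Finset.mem_union_right _ (Finset.inv_mem_inv hf))
  obtain ⟨c, hc, hpick⟩ := aux_pick hfree m T₀ hT₀ ε η hε hη
  have main : ∀ N : ℕ, ∃ (K : ℕ) (T : Fin K → Finset G) (V : Fin K → Set X),
      CastleInv m F δ η T V ∧ (1 - ε < m.real (cUnion T V) ∨ N * c ≤ m.real (cUnion T V)) := by
    intro N
    induction N with
    | zero =>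
      refine ⟨0, Fin.elim0, Fin.elim0, ⟨fun k => k.elim0, fun k => k.elim0, fun k => k.elim0, ?_⟩,
        Or.inr ?_⟩
      · simp [cCut, cUnion]
      · simp [cUnion]
    | succ N ih =>
      obtain ⟨K, T, V, hinv, hor⟩ := ih
      by_cases hbig : 1 - ε < m.real (cUnion T V)
      · exact ⟨K, T, V, hinv, Or.inl hbig⟩
      have hN := hor.resolve_left hbig
      have hAm : MeasurableSet (cUnion T V) := (cUnion_compact T V hinv.cpt).measurableSet
      have hB : ε ≤ m.real (cUnion T V)ᶜ := by
        rw [probReal_compl_eq_one_sub hAm]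
        linarith
      obtain ⟨T', U, W, h1, h2, h3, h4, h5, h6, h7, h8, h9⟩ := hpick _ hAm.compl hB
      obtain ⟨r1, r2⟩ := aux_step m F δ δ' η ε c hδ hδ'1 hε hc T₀ hT₀ hF hF' T V hinv T' U W
        h1 h2 h3 h4 h5 h6 h7 h8 h9
      refine ⟨K + 1, _, _, r1, Or.inr ?_⟩
      push_cast
      linarith
  obtain ⟨N, hN⟩ := exists_nat_gt (1 / c)
  obtain ⟨K, T, V, hinv, hor⟩ := main N
  refine ⟨K, T, V, hinv, hor.resolve_right ?_⟩
  intro hcon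
  have : m.real (cUnion T V) ≤ 1 := measureReal_le_one
  rw [div_lt_iff₀ hc] at hN
  linarith

theorem aux_thick {G X : Type*} [Group G] [MetricSpace X] [CompactSpace X]
    [MulAction G X] [ContinuousConstSMul G X] {K : ℕ} (T : Fin K → Finset G) (V : Fin K → Set X)
    (hV : ∀ k, IsCompact (V k)) (U : Fin K → Set X) (hU : ∀ k, IsOpen (U k))
    (hVU : ∀ k, V k ⊆ U k)
    (hd : ∀ k l, k ≠ l → Disjoint ((T k : Set G) • V k) ((T l : Set G) • V l)) :
    ∃ V' : Fin K → Set X, (∀ k, IsOpen (V' k)) ∧ (∀ k, V k ⊆ V' k) ∧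
      (∀ k, closure (V' k) ⊆ U k) ∧
      ∀ k l, k ≠ l → Disjoint ((T k : Set G) • closure (V' k)) ((T l : Set G) • closure (V' l)) := by
  have h1 : ∀ (k : Fin K) (O : Set X), IsOpen O → V k ⊆ O → ∀ᶠ r in nhdsWithin (0:ℝ) (Ioi 0),
      closure (Metric.thickening r (V k)) ⊆ O := by
    intro k O hO hVO
    obtain ⟨r, hr, hsub⟩ := (hV k).exists_cthickening_subset_open hO hVO
    filter_upwards [Ioo_mem_nhdsGT hr] with q hq
    exact (Metric.closure_thickening_subset_cthickening _ _).trans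
      ((Metric.cthickening_mono hq.2.le _).trans hsub)
  have hopen : ∀ (S : Finset G) (O : Set X), IsOpen O → IsOpen (⋂ s ∈ S, (fun x => s • x) ⁻¹' O) := 
    fun S O hO => isOpen_biInter_finset fun s _ => hO.preimage (continuous_const_smul s)
  have hC : ∀ k, IsCompact ((T k : Set G) • V k) := by
    intro k
    rw [← Set.iUnion_smul_set]
    exact (T k).isCompact_biUnion fun s _ => (hV k).smul s
  have h2 : ∀ k l, ∀ᶠ r in nhdsWithin (0:ℝ) (Ioi 0), k ≠ l →
      Disjoint ((T k : Set G) • closure (Metric.thickening r (V k)))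
        ((T l : Set G) • closure (Metric.thickening r (V l))) := by
    intro k l
    by_cases hkl : k = l
    · simp [hkl]
    obtain ⟨O1, O2, ho1, ho2, hs1, hs2, hdis⟩ :=
      SeparatedNhds.of_isCompact_isCompact (hC k) (hC l) (hd k l hkl)
    have a1 := h1 k _ (hopen (T k) O1 ho1) (by
      intro x hx
      simp only [mem_iInter]
      intro s hs
      exact hs1 (Set.smul_mem_smul hs hx))
    have a2 := h1 l _ (hopen (T l) O2 ho2) (by
      intro x hx
      simp only [mem_iInter]
      intro s hs
      exact hs2 (Set.smul_mem_smul hs hx))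
    filter_upwards [a1, a2] with r hr1 hr2 _
    refine hdis.mono ?_ ?_
    · rintro _ ⟨s, hs, x, hx, rfl⟩
      have := hr1 hx
      simp only [mem_iInter] at this
      exact this s hs
    · rintro _ ⟨s, hs, x, hx, rfl⟩
      have := hr2 hx
      simp only [mem_iInter] at this
      exact this s hs
  have h3 : ∀ᶠ r in nhdsWithin (0:ℝ) (Ioi 0), ∀ k l, k ≠ l →
      Disjoint ((T k : Set G) • closure (Metric.thickening r (V k)))
        ((T l : Set G) • closure (Metric.thickening r (V l))) := by
    rw [Filter.eventually_all]; intro k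
    rw [Filter.eventually_all]; intro l
    exact h2 k l
  have h4 : ∀ᶠ r in nhdsWithin (0:ℝ) (Ioi 0), ∀ k,
      closure (Metric.thickening r (V k)) ⊆ U k := by
    rw [Filter.eventually_all]; intro k
    exact h1 k _ (hU k) (hVU k)
  obtain ⟨r, hr3, hr4, hr0⟩ := (h3.and (h4.and self_mem_nhdsWithin)).exists
  exact ⟨fun k => Metric.thickening r (V k), fun k => Metric.isOpen_thickening,
    fun k => Metric.self_subset_thickening hr0 _, hr4, hr3⟩

open Classical in
theorem aux_bad {G X : Type*} [Group G] [MetricSpace X] [CompactSpace X]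
    [MeasurableSpace X] [BorelSpace X] [MulAction G X] [ContinuousConstSMul G X]
    (m : Measure X) [IsProbabilityMeasure m]
    [SMulInvariantMeasure G X m] (F : Finset G) (δ η η' : ℝ)
    (hδ : 0 < δ) (hη' : 0 < η')
    {K : ℕ} (T : Fin K → Finset G) (V : Fin K → Set X) (h : CastleInv m F δ η T V) :
    m.real (⋃ k ∈ Finset.univ.filter (fun k => 
      η' * (T k).card < (((T k).filter fun s => ∃ f ∈ F, f * s ∉ T k).card : ℝ)),
        (T k : Set G) • V k) ≤ δ / η' := by
  set bad : Fin K → Finset G := fun k => (T k).filter fun s => ∃ f ∈ F, f * s ∉ T k with hbad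
  have hbT : ∀ k, bad k ⊆ T k := fun k => Finset.filter_subset _ _
  have htow : ∀ k, IsTower G X (T k) (V k) := by
    intro k s hs t ht hst
    obtain ⟨U, -, hVU, -, hU⟩ := h.opn k
    exact (hU hs ht hst).mono (smul_set_mono hVU) (smul_set_mono hVU)
  have hbe : ∀ k, m.real ((bad k : Set G) • V k) = (bad k).card * m.real (V k) := fun k =>
    aux_tower_eq m _ _ (h.cpt k).measurableSet
      (fun s hs t ht hst => htow k (hbT k hs) (hbT k ht) hst)
  have hbm : ∀ k, MeasurableSet ((bad k : Set G) • V k) := by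
    intro k
    rw [← Set.iUnion_smul_set]
    exact ((bad k).isCompact_biUnion fun s _ => (h.cpt k).smul s).measurableSet
  have hsub : (⋃ k ∈ Finset.univ, (bad k : Set G) • V k) ⊆ ⋃ f ∈ F, cCut T V f := by
    intro x hx
    simp only [mem_iUnion] at hx ⊢
    obtain ⟨k, -, s, hs, v, hv, rfl⟩ := hx
    obtain ⟨hsT, f, hf, hfs⟩ := Finset.mem_filter.1 hs
    refine ⟨f, hf, Or.inl (mem_iUnion.2 ⟨k, Set.smul_mem_smul hsT hv⟩), ?_⟩
    intro hgood
    obtain ⟨l, s', ⟨hs', hfs'⟩, v', hv', he⟩ := mem_iUnion.1 hgood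
    have he' : s' • v' = s • v := he
    have hlk : l = k := by
      by_contra hlk
      refine Set.disjoint_left.1 (h.dis l k hlk) (Set.smul_mem_smul hs' hv') ?_
      rw [he']
      exact Set.smul_mem_smul hsT hv
    subst hlk
    have hss : s' = s := by
      by_contra hss
      refine Set.disjoint_left.1 (htow l hs' hsT hss) (Set.smul_mem_smul_set hv') ?_
      rw [he']
      exact Set.smul_mem_smul_set hv
    exact hfs (hss ▸ hfs')
  have hsum : ∑ k, m.real ((bad k : Set G) • V k) ≤ δ := by
    rw [← measureReal_biUnion_finset]
    · calc _ ≤ m.real (⋃ f ∈ F, cCut T V f) := measureReal_mono hsub (measure_ne_top _ _)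
        _ ≤ ∑ f ∈ F, m.real (cCut T V f) := measureReal_biUnion_finset_le _ _
        _ ≤ δ * m.real (cUnion T V) := h.cut
        _ ≤ δ * 1 := by gcongr; exact measureReal_le_one
        _ = δ := mul_one _
    · intro k _ l _ hkl
      exact (h.dis k l hkl).mono (Set.smul_subset_smul_right (hbT k))
        (Set.smul_subset_smul_right (hbT l))
    · exact fun k _ => hbm k
  rw [le_div_iff₀ hη']
  refine le_trans ?_ hsum
  calc _ ≤ (∑ k ∈ Finset.univ.filter (fun k => η' * (T k).card < ((bad k).card : ℝ)),
        m.real ((T k : Set G) • V k)) * η' := by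
        gcongr
        exact measureReal_biUnion_finset_le _ _
    _ = ∑ k ∈ Finset.univ.filter (fun k => η' * (T k).card < ((bad k).card : ℝ)),
        m.real ((T k : Set G) • V k) * η' := Finset.sum_mul _ _ _
    _ ≤ ∑ k ∈ Finset.univ.filter (fun k => η' * (T k).card < ((bad k).card : ℝ)),
        m.real ((bad k : Set G) • V k) := by
        refine Finset.sum_le_sum fun k hk => ?_
        have hk' := (Finset.mem_filter.1 hk).2
        rw [hbe]
        have h1 := aux_tower_le m (T k) (V k)
        have h0 : 0 ≤ m.real (V k) := measureReal_nonneg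
        calc _ ≤ ((T k).card * m.real (V k)) * η' := by gcongr
          _ = (η' * (T k).card) * m.real (V k) := by ring
          _ ≤ _ := by gcongr
    _ ≤ _ := Finset.sum_le_sum_of_subset_of_nonneg (Finset.filter_subset _ _)
        (fun _ _ _ => measureReal_nonneg)


/-- Ornstein–Weiss-type castles with small open bases. For every `μ ∈ M_G(X)`,
`n ≥ 1`, finite `F ⊆ G` and `ε, η > 0` there is a castle `{(T_k, cl(V_k))}` with open bases
`V_k`, `(F,η)`-invariant shapes, levels of diameter `< η`, an integer in
`[|T_k|/(2n), |T_k|/n]` for each `k`, and `μ(⊔_k T_k · V_k) > 1 - ε`. -/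
theorem exists_castle_of_free_action
    {G X : Type*} [Group G] [Countable G] [Infinite G]
    [MetricSpace X] [CompactSpace X]
    [MeasurableSpace X] [BorelSpace X]
    [MulAction G X] [ContinuousConstSMul G X]
    (hG : AmenableGroup G)
    (hfree : FreeAction G X)
    (μ : ProbabilityMeasure X) (hμ : μ ∈ MG G X)
    (n : ℕ) (hn : 1 ≤ n)
    (F : Finset G) (ε η : ℝ) (hε : 0 < ε) (hη : 0 < η) :
    ∃ (K : ℕ) (T : Fin K → Finset G) (V : Fin K → Set X),
      (∀ k, IsOpen (V k)) ∧
      (∀ k, IsTower G X (T k) (closure (V k))) ∧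
      (∀ k l, k ≠ l →
        Disjoint ((T k : Set G) • closure (V k)) ((T l : Set G) • closure (V l))) ∧
      (∀ k, FolnerInv G F η (T k)) ∧
      (∀ k, ∀ s ∈ T k, Metric.diam (s • closure (V k)) < η) ∧
      (∀ k, ∃ d : ℕ, ((T k).card : ℝ) / (2 * n) ≤ d ∧ (d : ℝ) ≤ ((T k).card : ℝ) / n) ∧
      1 - ε < (μ (⋃ k, (T k : Set G) • V k) : ℝ) := by
  classical
  set m : Measure X := (μ : Measure X) with hm
  have : SMulInvariantMeasure G X m := ⟨fun c s hs => by
    have h1 := hμ c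
    have h2 : Measure.map (fun x => c • x) m s = m s := by rw [h1]
    rwa [Measure.map_apply (measurable_const_smul c) hs] at h2⟩
  obtain ⟨F₁, hF₁⟩ := Infinite.exists_subset_card_eq G n
  set F' := F ∪ F₁ with hF'
  have hnF' : n ≤ F'.card := hF₁ ▸ Finset.card_le_card Finset.subset_union_right
  set η' := min η (1 / 2) with hη'
  have hη'0 : 0 < η' := lt_min hη (by norm_num)
  obtain ⟨K, T, V, hinv, hbig⟩ := aux_castle hG hfree m F' (η' * (ε / 2)) η (ε / 2)
    (by positivity) (by positivity) hη
  choose U hUo hVU hUd hUt using hinv.opn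
  obtain ⟨V', hV'o, hVV', hV'U, hV'd⟩ := aux_thick T V hinv.cpt U hUo hVU hinv.dis
  have hbad := aux_bad m F' (η' * (ε / 2)) η η' (by positivity) hη'0 T V hinv
  set bad : Fin K → Finset G := fun k => (T k).filter fun s => ∃ f ∈ F', f * s ∉ T k with hbaddef
  set T' : Fin K → Finset G :=
    fun k => if η' * (T k).card < ((bad k).card : ℝ) then ∅ else T k with hT'
  have hcase : ∀ k, T' k = ∅ ∨ (T' k = T k ∧ ((bad k).card : ℝ) ≤ η' * (T k).card) := by
    intro k
    by_cases h : η' * (T k).card < ((bad k).card : ℝ)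
    · left; simp only [hT', if_pos h]
    · right; simp only [hT', if_neg h]; exact ⟨trivial, not_lt.1 h⟩
  have hsubT : ∀ k, T' k ⊆ T k := by
    intro k
    rcases hcase k with h | h
    · rw [h]; simp
    · rw [h.1]
  refine ⟨K, T', V', hV'o, ?_, ?_, ?_, ?_, ?_, ?_⟩
  · intro k s hs t ht hst
    exact (hUt k (hsubT k hs) (hsubT k ht) hst).mono (smul_set_mono (hV'U k))
      (smul_set_mono (hV'U k))
  · intro k l hkl
    exact (hV'd k l hkl).mono (Set.smul_subset_smul_right (hsubT k))
      (Set.smul_subset_smul_right (hsubT l))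
  · intro k
    rcases hcase k with h | ⟨h, hb⟩
    · rw [h]; simp [FolnerInv]
    · rw [h]
      unfold FolnerInv
      have h1 : ((T k).filter fun s => ¬ ∃ f ∈ F', f * s ∉ T k).card ≤
          ({s | s ∈ T k ∧ ∀ f ∈ F, f * s ∈ T k} : Set G).ncard := by
        rw [← Set.ncard_coe_finset]
        refine Set.ncard_le_ncard ?_ ((T k).finite_toSet.subset fun s hs => hs.1)
        intro s hs
        rw [Finset.mem_coe, Finset.mem_filter] at hs
        push Not at hs
        exact ⟨hs.1, fun f hf => hs.2 f (Finset.mem_union_left _ hf)⟩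
      have h2 := Finset.card_filter_add_card_filter_not (s := T k) (fun s => ∃ f ∈ F', f * s ∉ T k)
      have h1' : (((T k).filter fun s => ¬ ∃ f ∈ F', f * s ∉ T k).card : ℝ) ≤
          ({s | s ∈ T k ∧ ∀ f ∈ F, f * s ∈ T k} : Set G).ncard := by exact_mod_cast h1
      have h2' : ((bad k).card : ℝ) + ((T k).filter fun s => ¬ ∃ f ∈ F', f * s ∉ T k).card
          = (T k).card := by exact_mod_cast h2
      have h3 : η' * (T k).card ≤ η * (T k).card := by
        gcongr; exact min_le_left _ _
      linarith
  · intro k s hs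
    refine lt_of_le_of_lt (Metric.diam_mono (smul_set_mono (hV'U k)) ?_) (hUd k s (hsubT k hs))
    exact Metric.isBounded_of_compactSpace
  · intro k
    rcases hcase k with h | ⟨h, hb⟩
    · rw [h]; exact ⟨0, by simp⟩
    · rw [h]
      rcases (T k).eq_empty_or_nonempty with he | hne
      · rw [he]; exact ⟨0, by simp⟩
      have hpos : (0:ℝ) < (T k).card := by exact_mod_cast hne.card_pos
      have hlt : (bad k).card < (T k).card := by
        have : ((bad k).card : ℝ) < (T k).card := by
          have : η' * (T k).card ≤ 1 / 2 * (T k).card := by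
            gcongr; exact min_le_right _ _
          linarith
        exact_mod_cast this
      obtain ⟨s, hs, hsb⟩ := Finset.exists_mem_notMem_of_card_lt_card hlt
      have hsF : ∀ f ∈ F', f * s ∈ T k := by
        intro f hf
        by_contra hcon
        exact hsb (Finset.mem_filter.2 ⟨hs, f, hf, hcon⟩)
      have hnT : n ≤ (T k).card := by
        refine hnF'.trans ?_
        refine Finset.card_le_card_of_injOn (fun f => f * s) hsF ?_
        intro a _ b _ hab
        exact mul_right_cancel hab
      have hn0 : (0:ℝ) < n := by exact_mod_cast hn
      refine ⟨(T k).card / n, ?_, Nat.cast_div_le⟩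
      rw [div_le_iff₀ (by positivity)]
      have hq : 1 ≤ (T k).card / n := (Nat.one_le_div_iff (by omega)).2 hnT
      have hr := Nat.div_add_mod (T k).card n
      have hr' := Nat.mod_lt (T k).card (show n > 0 by omega)
      have : (T k).card ≤ (T k).card / n * (2 * n) := by nlinarith
      exact_mod_cast this
  · have hsub : cUnion T V ⊆ (⋃ k, (T' k : Set G) • V' k) ∪
        (⋃ k ∈ Finset.univ.filter (fun k => η' * (T k).card < ((bad k).card : ℝ)),
          (T k : Set G) • V k) := by
      intro x hx
      obtain ⟨k, hk⟩ := mem_iUnion.1 hx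
      by_cases h : η' * (T k).card < ((bad k).card : ℝ)
      · right
        simp only [mem_iUnion]
        exact ⟨k, by simpa using h, hk⟩
      · left
        refine mem_iUnion.2 ⟨k, ?_⟩
        have : T' k = T k := by simp only [hT', if_neg h]
        rw [this]
        exact Set.smul_subset_smul_left (hVV' k) hk
    have h1 := (measureReal_mono (μ := m) hsub (measure_ne_top _ _)).trans
      (measureReal_union_le _ _)
    have h2 : η' * (ε / 2) / η' = ε / 2 := by field_simp
    rw [h2] at hbad
    have h3 : m.real (⋃ k, (T' k : Set G) • V' k) = ((μ (⋃ k, (T' k : Set G) • V' k) : NNReal) : ℝ) := rfl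
    rw [← h3]
    linarith
end

section
/- Let G be a countably infinite discrete amenable group, X an infinite compact metrizable space with compatible metric d, and α: G ↷ X a minimal free continuous action such that E_G(X) is compact and zero-dimensional in the weak* topology. Then for every finite subset F ⊆ G and every ε > 0 and δ > 0, there exists a castle {(T_i, V_i) : i ∈ I} with every V_i open such that each T_i is (F,δ)-invariant, diam(t·V_i) < δ for all i ∈ I and t ∈ T_i, and μ(X \ ⊔_{i∈I} T_i·V_i) < ε for all μ ∈ M_G(X). -/
open MeasureTheory Set Pointwise

variable (G X : Type*)

section CastleProof

open scoped Classical in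
/-- Number of indices `s ∈ S` with `y ∈ A s`. -/
noncomputable def cnt {G X : Type*} (S : Finset G) (A : G → Set X) (y : X) : ℝ :=
  ((S.filter (fun s => y ∈ A s)).card : ℝ)

theorem cnt_eq_sum {G X : Type*} (S : Finset G) (A : G → Set X) (y : X) :
    cnt S A y = ∑ s ∈ S, (A s).indicator (fun _ => (1:ℝ)) y := by
  classical
  simp [cnt, Set.indicator_apply]

theorem cnt_le_card {G X : Type*} (S : Finset G) (A : G → Set X) (y : X) :
    cnt S A y ≤ S.card := by
  classical
  unfold cnt
  exact_mod_cast Finset.card_filter_le _ _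

theorem cnt_nonneg {G X : Type*} (S : Finset G) (A : G → Set X) (y : X) :
    0 ≤ cnt S A y := by
  unfold cnt; positivity

theorem cnt_mono {G X : Type*} (S : Finset G) {A B : G → Set X} {y : X}
    (h : ∀ s ∈ S, y ∈ A s → y ∈ B s) : cnt S A y ≤ cnt S B y := by
  classical
  unfold cnt
  have : (S.filter (fun s => y ∈ A s)) ⊆ (S.filter (fun s => y ∈ B s)) := by
    intro s hs
    rw [Finset.mem_filter] at hs ⊢
    exact ⟨hs.1, h s hs.1 hs.2⟩
  exact_mod_cast Finset.card_le_card this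

theorem cnt_add_compl {G X : Type*} (S : Finset G) (A : G → Set X) (y : X) :
    cnt S A y + cnt S (fun s => (A s)ᶜ) y = S.card := by
  classical
  unfold cnt
  have := Finset.card_filter_add_card_filter_not (s := S) (fun s => y ∈ A s)
  simp only [Set.mem_compl_iff]
  exact_mod_cast this

theorem cnt_eq_card {G X : Type*} (S : Finset G) (A : G → Set X) (y : X)
    (h : ∀ s ∈ S, y ∈ A s) : cnt S A y = S.card := by
  classical
  unfold cnt
  rw [Finset.filter_true_of_mem h]

theorem measurable_cnt {G X : Type*} [MeasurableSpace X] (S : Finset G) (A : G → Set X)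
    (hA : ∀ s ∈ S, MeasurableSet (A s)) : Measurable (cnt S A) := by
  have : cnt S A = fun y => ∑ s ∈ S, (A s).indicator (fun _ => (1:ℝ)) y := by
    funext y; exact cnt_eq_sum S A y
  rw [this]
  exact Finset.measurable_fun_sum _ fun s hs => measurable_const.indicator (hA s hs)

theorem integrable_cnt {G X : Type*} [MeasurableSpace X] (ν : Measure X) [IsProbabilityMeasure ν]
    (S : Finset G) (A : G → Set X)
    (hA : ∀ s ∈ S, MeasurableSet (A s)) : Integrable (cnt S A) ν := by
  have : cnt S A = fun y => ∑ s ∈ S, (A s).indicator (fun _ => (1:ℝ)) y := by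
    funext y; exact cnt_eq_sum S A y
  rw [this]
  exact integrable_finsetSum _ fun s hs => (integrable_const _).indicator (hA s hs)

theorem integral_cnt {G X : Type*} [MeasurableSpace X] (ν : Measure X) [IsProbabilityMeasure ν]
    (S : Finset G) (A : G → Set X)
    (hA : ∀ s ∈ S, MeasurableSet (A s)) : ∫ y, cnt S A y ∂ν = ∑ s ∈ S, ν.real (A s) := by
  simp_rw [cnt_eq_sum]
  rw [integral_finsetSum _ fun s hs => (integrable_const _).indicator (hA s hs)]
  refine Finset.sum_congr rfl fun s hs => ?_
  rw [integral_indicator (hA s hs)]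
  simp

/-- if every point of `C` is in at least `a` of the sets then `a ν(C) ≤ ∑ ν(A s)`. -/
theorem cnt_lower {G X : Type*} [MeasurableSpace X] (ν : Measure X) [IsProbabilityMeasure ν]
    (S : Finset G) (A : G → Set X)
    (hA : ∀ s ∈ S, MeasurableSet (A s)) (C : Set X) (hC : MeasurableSet C) (a : ℝ)
    (h : ∀ y ∈ C, a ≤ cnt S A y) : a * ν.real C ≤ ∑ s ∈ S, ν.real (A s) := by
  rw [← integral_cnt ν S A hA]
  have : a * ν.real C = ∫ y, C.indicator (fun _ => a) y ∂ν := by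
    rw [integral_indicator hC]; simp [mul_comm]
  rw [this]
  refine integral_mono ((integrable_const _).indicator hC) (integrable_cnt ν S A hA) fun y => ?_
  by_cases hy : y ∈ C
  · simp [hy, h y hy]
  · simp [hy, cnt_nonneg]

theorem cnt_upper {G X : Type*} [MeasurableSpace X] (ν : Measure X) [IsProbabilityMeasure ν]
    (S : Finset G) (A : G → Set X)
    (hA : ∀ s ∈ S, MeasurableSet (A s)) (C : Set X) (hC : MeasurableSet C) (a m : ℝ)
    (h : ∀ y ∈ C, cnt S A y ≤ a + m) (h' : ∀ y ∉ C, cnt S A y ≤ a) :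
    ∑ s ∈ S, ν.real (A s) ≤ a + m * ν.real C := by
  rw [← integral_cnt ν S A hA]
  have : a + m * ν.real C = ∫ y, (a + C.indicator (fun _ => m) y) ∂ν := by
    rw [integral_add (integrable_const _) ((integrable_const _).indicator hC),
      integral_indicator hC]; simp [mul_comm]
  rw [this]
  refine integral_mono (integrable_cnt ν S A hA)
    ((integrable_const _).add ((integrable_const _).indicator hC)) fun y => ?_
  by_cases hy : y ∈ C
  · simp [hy, h y hy]
  · simp [hy, h' y hy]

/-- Greedy step: inductive construction of `e`-disjoint tiles. -/
theorem greedy_aux {G X : Type*} [Group G] [MeasurableSpace X] [MulAction G X]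
    [MeasurableConstSMul G X]
    (S : Finset G) (hS : S.Nonempty) (e : ℝ) (he1 : e < 1)
    (Y : Set X) (hY : MeasurableSet Y) (𝒰 : Finset (Set X))
    (h𝒰 : ∀ U ∈ 𝒰, MeasurableSet U ∧
      ∀ y ∈ U, ∀ y' ∈ U, ∀ s ∈ S, ∀ s' ∈ S, s • y = s' • y' → s = s') :
    ∃ h : X → Option G, (∀ o, MeasurableSet {x | h x = o}) ∧
      (∀ x s, h x = some s → s ∈ S) ∧
      (∀ y, ∀ s ∈ S, h (s • y) = some s →
        (1 - e) * S.card ≤ cnt S (fun s => {y | h (s • y) = some s}) y ∧ y ∈ Y ∧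
        ∀ s' ∈ S, h (s' • y) ≠ none) ∧
      (∀ y ∈ Y, (∃ U ∈ 𝒰, y ∈ U) → e * S.card ≤ cnt S (fun s => {y | h (s • y) ≠ none}) y) := by
  classical
  have hcard : (0:ℝ) < S.card := by exact_mod_cast hS.card_pos
  induction 𝒰 using Finset.induction_on with
  | empty =>
    refine ⟨fun _ => none, fun o => ?_, ?_, ?_, ?_⟩
    · by_cases h : none = o
      · simp [h]
      · simp [h]
    · simp
    · simp
    · simp
  | insert U 𝒰 hU ih =>
    obtain ⟨h, hm, hr, hc, hb⟩ := ih fun V hV => h𝒰 V (Finset.mem_insert_of_mem hV)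
    obtain ⟨hUm, hUs⟩ := h𝒰 U (Finset.mem_insert_self _ _)
    have hmt : ∀ (s : G) (o : Option G), MeasurableSet {y : X | h (s • y) = o} := fun s o =>
      measurable_const_smul s (hm o)
    set Q : Set X := {y | (1 - e) * S.card ≤ cnt S (fun s => {y | h (s • y) = none}) y} with hQ
    have hQm : MeasurableSet Q := by
      apply measurableSet_le measurable_const
      exact measurable_cnt _ _ fun s _ => hmt s none
    set P : Set X := Y ∩ U ∩ Q with hP
    have hPm : MeasurableSet P := (hY.inter hUm).inter hQm
    have huniq : ∀ x, ∀ s ∈ S, ∀ s' ∈ S, s⁻¹ • x ∈ P → s'⁻¹ • x ∈ P → s = s' := by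
      intro x s hs s' hs' h1 h2
      exact hUs _ h1.1.2 _ h2.1.2 s hs s' hs' (by simp)
    let h' : X → Option G := fun x =>
      if h x = none then
        (if H : ∃ s ∈ S, s⁻¹ • x ∈ P then some H.choose else none) else h x
    have hPr1 : ∀ x, h x ≠ none → h' x = h x := fun x hx => by simp [h', hx]
    have hPr2 : ∀ x, h x = none → ∀ s ∈ S, s⁻¹ • x ∈ P → h' x = some s := by
      intro x hx s hs hsx
      have H : ∃ s ∈ S, s⁻¹ • x ∈ P := ⟨s, hs, hsx⟩
      simp only [h', hx, if_true, dif_pos H]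
      rw [huniq x _ H.choose_spec.1 s hs H.choose_spec.2 hsx]
    have hPr3 : ∀ x, h x = none → ∀ s, h' x = some s → s ∈ S ∧ s⁻¹ • x ∈ P := by
      intro x hx s hsx
      simp only [h', hx, if_true] at hsx
      split_ifs at hsx with H
      simp only [Option.some.injEq] at hsx
      rw [← hsx]; exact H.choose_spec
    have hPr4 : ∀ x s, h' x = some s ↔ h x = some s ∨ (h x = none ∧ s ∈ S ∧ s⁻¹ • x ∈ P) := by
      intro x s
      constructor
      · intro hx
        by_cases h0 : h x = none
        · exact Or.inr ⟨h0, hPr3 x h0 s hx⟩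
        · left; rw [← hPr1 x h0]; exact hx
      · rintro (hx | ⟨h0, hs, hx⟩)
        · rw [hPr1 x (by simp [hx]), hx]
        · exact hPr2 x h0 s hs hx
    have hmS : ∀ s, MeasurableSet {x | h' x = some s} := by
      intro s
      have : {x | h' x = some s} = {x | h x = some s} ∪
          (if s ∈ S then {x | h x = none} ∩ (fun x => s⁻¹ • x) ⁻¹' P else ∅) := by
        ext x
        rw [Set.mem_ofPred_eq, hPr4]
        by_cases hs : s ∈ S <;> simp [hs]
      rw [this]
      refine (hm _).union ?_
      split_ifs
      · exact (hm none).inter (measurable_const_smul _ hPm)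
      · exact MeasurableSet.empty
    have hr' : ∀ x s, h' x = some s → s ∈ S := by
      intro x s hx
      rcases (hPr4 x s).1 hx with h1 | h1
      · exact hr x s h1
      · exact h1.2.1
    have hPall : ∀ y ∈ P, ∀ s ∈ S, h' (s • y) ≠ none := by
      intro y hy s hs
      by_cases h0 : h (s • y) = none
      · rw [hPr2 _ h0 s hs (by simpa using hy)]; simp
      · rw [hPr1 _ h0]; exact h0
    refine ⟨h', ?_, hr', ?_, ?_⟩
    · intro o
      cases o with
      | some s => exact hmS s
      | none =>
        have : {x | h' x = none} = (⋃ s ∈ S, {x | h' x = some s})ᶜ := by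
          ext x
          simp only [mem_ofPred_eq, mem_compl_iff, mem_iUnion, not_exists]
          constructor
          · intro hx s _ ; simp [hx]
          · intro hx
            by_contra hne
            obtain ⟨s, hs⟩ := Option.ne_none_iff_exists'.1 hne
            exact hx s (hr' x s hs) hs
        rw [this]
        exact (S.measurableSet_biUnion fun s _ => hmS s).compl
    · intro y s hs hsy
      rcases (hPr4 _ s).1 hsy with h1 | h1
      · obtain ⟨a1, a2, a3⟩ := hc y s hs h1
        refine ⟨a1.trans (cnt_mono S fun s hs hh => ?_), a2, fun s' hs' => ?_⟩
        · exact (hPr4 _ s).2 (Or.inl hh)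
        · rw [hPr1 _ (a3 s' hs')]; exact a3 s' hs'
      · have hyP : y ∈ P := by simpa using h1.2.2
        refine ⟨hyP.2.trans (cnt_mono S fun s hs hh => ?_), hyP.1.1, hPall y hyP⟩
        exact hPr2 _ hh s hs (by simpa using hyP)
    · rintro y hyY ⟨V, hV, hyV⟩
      rcases Finset.mem_insert.1 hV with rfl | hV
      · by_cases hyQ : y ∈ Q
        · rw [cnt_eq_card S _ y (hPall y ⟨⟨hyY, hyV⟩, hyQ⟩)]
          nlinarith
        · have h1 : cnt S (fun s => {y | h (s • y) = none}) y < (1 - e) * S.card := by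
            simpa [hQ] using hyQ
          have h2 := cnt_add_compl S (fun s => {y | h (s • y) = none}) y
          have h3 : cnt S (fun s => {y | h (s • y) = none}ᶜ) y ≤
              cnt S (fun s => {y | h' (s • y) ≠ none}) y := by
            refine cnt_mono S fun s hs hh => ?_
            have hh : h (s • y) ≠ none := hh
            show h' (s • y) ≠ none
            rw [hPr1 _ hh]; exact hh
          linarith
      · refine (hb y hyY ⟨V, hV, hyV⟩).trans (cnt_mono S fun s hs hh => ?_)
        have hh : h (s • y) ≠ none := hh
        show h' (s • y) ≠ none
        rw [hPr1 _ hh]; exact hh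

/-- Neighbourhoods on which the translates by `S` are disjoint. -/
theorem exists_sep_cover {G X : Type*} [Group G] [MetricSpace X] [CompactSpace X]
    [MulAction G X] [ContinuousConstSMul G X] (hfree : FreeAction G X) (S : Finset G) :
    ∃ 𝒰 : Finset (Set X), (∀ U ∈ 𝒰, IsOpen U ∧
      ∀ y ∈ U, ∀ y' ∈ U, ∀ s ∈ S, ∀ s' ∈ S, s • y = s' • y' → s = s') ∧
      ∀ y, ∃ U ∈ 𝒰, y ∈ U := by
  classical
  have key : ∀ x : X, ∃ U : Set X, x ∈ U ∧ IsOpen U ∧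
      ∀ y ∈ U, ∀ y' ∈ U, ∀ s ∈ S, ∀ s' ∈ S, s • y = s' • y' → s = s' := by
    intro x
    have h1 : ∀ s s' : G, ∃ U : Set X, x ∈ U ∧ IsOpen U ∧
        ∀ y ∈ U, ∀ y' ∈ U, s • y = s' • y' → s = s' := by
      intro s s'
      by_cases hss : s = s'
      · exact ⟨univ, mem_univ _, isOpen_univ, fun _ _ _ _ _ => hss⟩
      have hne : s • x ≠ s' • x := by
        intro h
        apply hss
        have : (s'⁻¹ * s) • x = x := by rw [mul_smul, h]; simp
        have := hfree _ _ this
        rw [inv_mul_eq_one] at this; exact this.symm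
      obtain ⟨A, B, hA, hB, hxA, hxB, hAB⟩ := t2_separation hne
      refine ⟨(fun y => s • y) ⁻¹' A ∩ (fun y => s' • y) ⁻¹' B, ⟨hxA, hxB⟩,
        (hA.preimage (continuous_const_smul s)).inter (hB.preimage (continuous_const_smul s')), ?_⟩
      intro y hy y' hy' h
      exact absurd h (hAB.ne_of_mem hy.1 hy'.2)
    choose U hU1 hU2 hU3 using h1
    refine ⟨⋂ s ∈ S, ⋂ s' ∈ S, U s s', ?_, ?_, ?_⟩
    · simp only [mem_iInter]; intro s _ s' _; exact hU1 s s'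
    · exact isOpen_biInter_finset fun s _ => isOpen_biInter_finset fun s' _ => hU2 s s'
    · intro y hy y' hy' s hs s' hs' h
      simp only [mem_iInter] at hy hy'
      exact hU3 s s' y (hy s hs s' hs') y' (hy' s hs s' hs') h
  choose U hU1 hU2 hU3 using key
  obtain ⟨t, ht⟩ := isCompact_univ.elim_finite_subcover U hU2
    (fun x _ => mem_iUnion.2 ⟨x, hU1 x⟩)
  refine ⟨t.image U, ?_, ?_⟩
  · intro V hV
    obtain ⟨x, _, rfl⟩ := Finset.mem_image.1 hV
    exact ⟨hU2 x, hU3 x⟩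
  · intro y
    obtain ⟨x, hx, hy⟩ := mem_iUnion₂.1 (ht (mem_univ y))
    exact ⟨U x, Finset.mem_image_of_mem _ hx, hy⟩


open scoped Classical in
theorem folner_iff {G : Type*} [Group G] (K : Finset G) (δ : ℝ) (S : Finset G) :
    FolnerInv G K δ S ↔
      ((S.filter (fun s => ¬ ∀ k ∈ K, k * s ∈ S)).card : ℝ) ≤ δ * S.card := by
  have h1 : ({s | s ∈ S ∧ ∀ k ∈ K, k * s ∈ S} : Set G) =
      ((S.filter (fun s => ∀ k ∈ K, k * s ∈ S) : Finset G) : Set G) := by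
    ext s; simp
  have h2 := Finset.card_filter_add_card_filter_not (s := S) (fun s => ∀ k ∈ K, k * s ∈ S)
  unfold FolnerInv
  rw [h1, Set.ncard_coe_finset]
  have h3 : ((S.filter (fun s => ∀ k ∈ K, k * s ∈ S)).card : ℝ) +
    ((S.filter (fun s => ¬ ∀ k ∈ K, k * s ∈ S)).card : ℝ) = S.card := by exact_mod_cast h2
  constructor <;> intro h <;> linarith

theorem folner_empty {G : Type*} [Group G] (K : Finset G) (δ : ℝ) : FolnerInv G K δ ∅ := by
  classical
  rw [folner_iff]; simp

theorem folner_mono {G : Type*} [Group G] {K K' : Finset G} {δ δ' : ℝ} {S : Finset G}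
    (hK : K ⊆ K') (hδ : δ' ≤ δ) (h : FolnerInv G K' δ' S) : FolnerInv G K δ S := by
  classical
  rw [folner_iff] at h ⊢
  calc ((S.filter (fun s => ¬ ∀ k ∈ K, k * s ∈ S)).card : ℝ)
      ≤ ((S.filter (fun s => ¬ ∀ k ∈ K', k * s ∈ S)).card : ℝ) := by
        have : (S.filter (fun s => ¬ ∀ k ∈ K, k * s ∈ S)) ⊆
            (S.filter (fun s => ¬ ∀ k ∈ K', k * s ∈ S)) := by
          intro s hs
          rw [Finset.mem_filter] at hs ⊢
          exact ⟨hs.1, fun h => hs.2 fun k hk => h k (hK hk)⟩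
        exact_mod_cast Finset.card_le_card this
    _ ≤ δ' * S.card := h
    _ ≤ δ * S.card := by gcongr

theorem folner_union {G : Type*} [Group G] {K : Finset G} {δ : ℝ} {S T U : Finset G}
    (hST : Disjoint S T) (hU : ∀ x, x ∈ U ↔ x ∈ S ∨ x ∈ T)
    (hS : FolnerInv G K δ S) (hT : FolnerInv G K δ T) : FolnerInv G K δ U := by
  classical
  rw [folner_iff] at hS hT ⊢
  have hU' : U = S ∪ T := by ext x; simp [hU]
  have hc : (U.card : ℝ) = S.card + T.card := by
    rw [hU', Finset.card_union_of_disjoint hST]; push_cast; rfl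
  have hsub : (U.filter (fun s => ¬ ∀ k ∈ K, k * s ∈ U)) ⊆
      (S.filter (fun s => ¬ ∀ k ∈ K, k * s ∈ S)) ∪ (T.filter (fun s => ¬ ∀ k ∈ K, k * s ∈ T)) := by
    intro s hs
    rw [Finset.mem_filter] at hs
    rw [Finset.mem_union, Finset.mem_filter, Finset.mem_filter]
    rcases (hU s).1 hs.1 with h | h
    · exact Or.inl ⟨h, fun h' => hs.2 fun k hk => (hU _).2 (Or.inl (h' k hk))⟩
    · exact Or.inr ⟨h, fun h' => hs.2 fun k hk => (hU _).2 (Or.inr (h' k hk))⟩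
  have h1 := (Finset.card_le_card hsub).trans (Finset.card_union_le _ _)
  have h2 : ((U.filter (fun s => ¬ ∀ k ∈ K, k * s ∈ U)).card : ℝ) ≤
    ((S.filter (fun s => ¬ ∀ k ∈ K, k * s ∈ S)).card : ℝ) +
    ((T.filter (fun s => ¬ ∀ k ∈ K, k * s ∈ T)).card : ℝ) := by exact_mod_cast h1
  rw [hc]; linarith

theorem folner_sub {G : Type*} [Group G] {F : Finset G} {δ δ' e : ℝ} {S R : Finset G}
    (hδ : 0 ≤ δ) (hRS : R ⊆ S) (hR : (1 - e) * S.card ≤ R.card) (hS : FolnerInv G F δ' S)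
    (h : δ' + F.card * e ≤ δ * (1 - e)) : FolnerInv G F δ R := by
  classical
  rw [folner_iff] at hS ⊢
  have hsub : (R.filter (fun s => ¬ ∀ k ∈ F, k * s ∈ R)) ⊆
      (S.filter (fun s => ¬ ∀ k ∈ F, k * s ∈ S)) ∪
        F.biUnion (fun k => (S \ R).image (fun s => k⁻¹ * s)) := by
    intro s hs
    rw [Finset.mem_filter] at hs
    obtain ⟨hsR, hs⟩ := hs
    rw [Finset.mem_union, Finset.mem_filter]
    by_cases h' : ∀ k ∈ F, k * s ∈ S
    · right
      push Not at hs
      obtain ⟨k, hk, hks⟩ := hs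
      refine Finset.mem_biUnion.2 ⟨k, hk, Finset.mem_image.2 ⟨k * s, ?_, by simp⟩⟩
      exact Finset.mem_sdiff.2 ⟨h' k hk, hks⟩
    · exact Or.inl ⟨hRS hsR, h'⟩
  have h1 := (Finset.card_le_card hsub).trans (Finset.card_union_le _ _)
  have h2 : (F.biUnion (fun k => (S \ R).image (fun s => k⁻¹ * s))).card ≤ F.card * (S \ R).card :=
    Finset.card_biUnion_le_card_mul _ _ _ fun k _ => Finset.card_image_le
  have h3 : ((S \ R).card : ℝ) = S.card - R.card := by
    rw [Finset.card_sdiff_of_subset hRS, Nat.cast_sub (Finset.card_le_card hRS)]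
  have h4 : ((R.filter (fun s => ¬ ∀ k ∈ F, k * s ∈ R)).card : ℝ) ≤
    ((S.filter (fun s => ¬ ∀ k ∈ F, k * s ∈ S)).card : ℝ) + F.card * (S \ R).card := by
    exact_mod_cast h1.trans (Nat.add_le_add_left h2 _)
  have h5 : (F.card : ℝ) * (S \ R).card ≤ F.card * (e * S.card) := by
    gcongr; rw [h3]; linarith
  have h6 : (δ' + F.card * e) * S.card ≤ δ * (1 - e) * S.card := by gcongr
  have h7 : δ * ((1 - e) * S.card) ≤ δ * R.card := by gcongr
  linarith

open scoped Classical in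
/-- A measurable partial tiling of `X` by translates of `(F,δ)`-invariant finite sets, encoded by
the map sending `x` to the position of `x` in its tile. -/
structure GoodTiling {G X : Type*} [Group G] [MeasurableSpace X] [MulAction G X]
    (F : Finset G) (δ : ℝ) (D : Finset G) (g : X → Option G) : Prop where
  meas : ∀ o, MeasurableSet {x | g x = o}
  range : ∀ x t, g x = some t → t ∈ D
  fol : ∀ y, FolnerInv G F δ (D.filter fun t => g (t • y) = some t)

/-- Overlaying new tiles on the old ones. -/
theorem overlay {G X : Type*} [Group G] [MeasurableSpace X] [MulAction G X]
    [MeasurableConstSMul G X] {F : Finset G} {δ : ℝ} {D S : Finset G} {g h : X → Option G}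
    (hg : GoodTiling F δ D g) (hh : GoodTiling F δ S h) :
    ∃ (D' : Finset G) (g' : X → Option G), GoodTiling F δ D' g' ∧
      (∀ x, h x ≠ none → g' x ≠ none) ∧
      (∀ x t, g x = some t → (∀ t' ∈ D, g (t' • t⁻¹ • x) = some t' → h (t' • t⁻¹ • x) = none) →
        g' x ≠ none) := by
  classical
  let cond : G → X → Prop := fun t x =>
    ∀ t' ∈ D, g (t' • t⁻¹ • x) = some t' → h (t' • t⁻¹ • x) = none
  have hgc : ∀ (s : G) (o : Option G), MeasurableSet {y : X | g (s • y) = o} := fun s o =>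
      measurable_const_smul s (hg.meas o)
  have hhc : ∀ (s : G) (o : Option G), MeasurableSet {y : X | h (s • y) = o} := fun s o =>
      measurable_const_smul s (hh.meas o)
  have hcm : ∀ t, MeasurableSet {x | cond t x} := by
    intro t
    have : {x | cond t x} = ⋂ t' ∈ D, ({x | g ((t' * t⁻¹) • x) = some t'}ᶜ ∪
        {x | h ((t' * t⁻¹) • x) = none}) := by
      ext x
      simp only [cond, mem_iInter, mem_union, mem_compl_iff, mem_ofPred_eq, mul_smul]
      refine forall₂_congr fun t' _ => ?_
      tauto
    rw [this]
    exact D.measurableSet_biInter fun t' _ => (hgc _ _).compl.union (hhc _ _)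
  let g' : X → Option G := fun x =>
    if h x = none then (if ∃ t, g x = some t ∧ cond t x then g x else none) else h x
  have gPr1 : ∀ x t, g' x = some t ↔ h x = some t ∨ (h x = none ∧ g x = some t ∧ cond t x) := by
    intro x t
    by_cases hx : h x = none
    · simp only [g', hx, if_true]
      split_ifs with H
      · obtain ⟨t', h1, h2⟩ := H
        constructor
        · intro h3
          have : t' = t := by rw [h1] at h3; exact Option.some.inj h3
          subst this
          exact Or.inr ⟨trivial, h3, h2⟩
        · rintro (h3 | h3)
          · simp at h3
          · exact h3.2.1
      · constructor
        · simp
        · rintro (h3 | h3)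
          · simp at h3
          · exact absurd ⟨t, h3.2⟩ H
    · simp [g', hx]
  have hmS : ∀ s, MeasurableSet {x | g' x = some s} := by
    intro s
    have : {x | g' x = some s} = {x | h x = some s} ∪
        ({x | h x = none} ∩ ({x | g x = some s} ∩ {x | cond s x})) := by
      ext x
      exact gPr1 x s
    rw [this]
    exact (hh.meas _).union ((hh.meas _).inter ((hg.meas _).inter (hcm s)))
  have hr' : ∀ x t, g' x = some t → t ∈ D ∪ S := by
    intro x t hx
    rw [Finset.mem_union]
    rcases (gPr1 x t).1 hx with h1 | h1
    · exact Or.inr (hh.range x t h1)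
    · exact Or.inl (hg.range x t h1.2.1)
  refine ⟨D ∪ S, g', ⟨?_, hr', ?_⟩, ?_, ?_⟩
  · intro o
    cases o with
    | some s => exact hmS s
    | none =>
      have : {x | g' x = none} = (⋃ s ∈ D ∪ S, {x | g' x = some s})ᶜ := by
        ext x
        simp only [mem_ofPred_eq, mem_compl_iff, mem_iUnion, not_exists]
        constructor
        · intro hx s _ ; simp [hx]
        · intro hx
          by_contra hne
          obtain ⟨s, hs⟩ := Option.ne_none_iff_exists'.1 hne
          exact hx s (hr' x s hs) hs
      rw [this]
      exact ((D ∪ S).measurableSet_biUnion fun s _ => hmS s).compl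
  · intro y
    by_cases hc : ∀ t' ∈ D, g (t' • y) = some t' → h (t' • y) = none
    · refine folner_union (S := S.filter fun t => h (t • y) = some t)
        (T := D.filter fun t => g (t • y) = some t) ?_ ?_ (hh.fol y) (hg.fol y)
      · rw [Finset.disjoint_left]
        intro t h1 h2
        rw [Finset.mem_filter] at h1 h2
        have := hc t h2.1 h2.2
        rw [h1.2] at this; simp at this
      · intro t
        simp only [Finset.mem_filter, Finset.mem_union]
        rw [gPr1]
        constructor
        · rintro ⟨_, h1 | h1⟩
          · exact Or.inl ⟨hh.range _ _ h1, h1⟩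
          · exact Or.inr ⟨hg.range _ _ h1.2.1, h1.2.1⟩
        · rintro (h1 | h1)
          · exact ⟨Or.inr h1.1, Or.inl h1.2⟩
          · refine ⟨Or.inl h1.1, Or.inr ⟨hc t h1.1 h1.2, h1.2, ?_⟩⟩
            simpa [cond] using hc
    · have : ((D ∪ S).filter fun t => g' (t • y) = some t) =
          S.filter fun t => h (t • y) = some t := by
        ext t
        simp only [Finset.mem_filter, Finset.mem_union]
        rw [gPr1]
        constructor
        · rintro ⟨_, h1 | h1⟩
          · exact ⟨hh.range _ _ h1, h1⟩
          · exact absurd (by simpa [cond] using h1.2.2) hc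
        · rintro h1
          exact ⟨Or.inr h1.1, Or.inl h1.2⟩
      rw [this]
      exact hh.fol y
  · intro x hx
    obtain ⟨s, hs⟩ := Option.ne_none_iff_exists'.1 hx
    rw [(gPr1 x s).2 (Or.inl hs)]; simp
  · intro x t hx hc
    by_cases h0 : h x = none
    · rw [(gPr1 x t).2 (Or.inr ⟨h0, hx, hc⟩)]; simp
    · obtain ⟨s, hs⟩ := Option.ne_none_iff_exists'.1 h0
      rw [(gPr1 x s).2 (Or.inl hs)]; simp


set_option maxHeartbeats 1000000 in
theorem improve {G X : Type*} [Group G] [MetricSpace X] [CompactSpace X]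
    [MeasurableSpace X] [BorelSpace X] [MulAction G X] [ContinuousConstSMul G X]
    (hG : AmenableGroup G) (hfree : FreeAction G X)
    (ν : Measure X) [IsProbabilityMeasure ν] [SMulInvariantMeasure G X ν]
    (F : Finset G) (δ : ℝ) (hδ : 0 < δ) (b₀ : ℝ) (hb₀ : 0 < b₀) :
    ∃ γ > 0, ∀ (D : Finset G) (g : X → Option G), GoodTiling F δ D g →
      b₀ ≤ ν.real {x | g x = none} → ∀ κ > 0,
      ∃ (D' : Finset G) (g' : X → Option G), GoodTiling F δ D' g' ∧
        ν.real {x | g x ≠ none} + γ - κ ≤ ν.real {x | g' x ≠ none} := by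
  classical
  set e : ℝ := min (b₀ / 4) (min (1 / 2) (δ / (4 * (F.card + 1)))) with he
  have he0 : 0 < e := by
    rw [he]; refine lt_min (by positivity) (lt_min (by norm_num) (by positivity))
  have he1 : e ≤ b₀ / 4 := min_le_left _ _
  have he2 : e ≤ 1 / 2 := (min_le_right _ _).trans (min_le_left _ _)
  have he3 : F.card * e ≤ δ / 4 := by
    have : e ≤ δ / (4 * (F.card + 1)) := (min_le_right _ _).trans (min_le_right _ _)
    rw [le_div_iff₀ (by positivity)] at this
    nlinarith
  refine ⟨(b₀ / 4) * (e * (b₀ / 2)), by positivity, ?_⟩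
  intro D g hg hb κ hκ
  set B : Set X := {x | g x = none} with hB
  have hBm : MeasurableSet B := hg.meas none
  set b : ℝ := ν.real B with hbdef
  set DD : Finset G := (D ×ˢ D).image (fun p => p.1 * p.2⁻¹) with hDD
  set η : ℝ := min (δ / 4) (κ / (2 * (DD.card + 1))) with hη
  have hη0 : 0 < η := by
    rw [hη]; exact lt_min (by positivity) (by positivity)
  obtain ⟨S, hSne, hSf⟩ := hG (DD ∪ F) η hη0
  have hcard : (0:ℝ) < S.card := by exact_mod_cast hSne.card_pos
  set Y : Set X := {y | (b / 2) * S.card ≤ cnt S (fun s => {y | s • y ∈ B}) y} with hYdef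
  have hBt : ∀ s : G, MeasurableSet {y : X | s • y ∈ B} := fun s => measurable_const_smul s hBm
  have hYm : MeasurableSet Y := measurableSet_le measurable_const (measurable_cnt _ _ fun s _ => hBt s)
  have hinv : ∀ (s : G) (A : Set X), ν.real {y : X | s • y ∈ A} = ν.real A := by
    intro s A
    exact congrArg ENNReal.toReal (measure_preimage_smul ν s A)
  obtain ⟨𝒰, h𝒰, hcov⟩ := exists_sep_cover hfree S
  obtain ⟨h, hm, hr, hc, hbb⟩ := greedy_aux S hSne e (by linarith) Y hYm 𝒰
    (fun U hU => ⟨(h𝒰 U hU).1.measurableSet, (h𝒰 U hU).2⟩)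
  have hmt : ∀ (s : G) (o : Option G), MeasurableSet {y : X | h (s • y) = o} := fun s o =>
      measurable_const_smul s (hm o)
  -- measure of Y
  have hνY : b / 2 ≤ ν.real Y := by
    have h1 := cnt_upper ν S (fun s => {y | s • y ∈ B}) (fun s _ => hBt s) Y hYm
      ((b / 2) * S.card) (S.card) (fun y _ => ?_) (fun y hy => ?_)
    · simp only [hinv] at h1
      rw [Finset.sum_const, nsmul_eq_mul] at h1
      have : S.card * (b / 2) ≤ S.card * ν.real Y := by
        rw [← hbdef] at h1; linarith
      exact le_of_mul_le_mul_left this hcard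
    · refine (cnt_le_card _ _ _).trans ?_
      have : 0 ≤ b := measureReal_nonneg
      have : 0 ≤ b / 2 * S.card := by positivity
      linarith
    · simp only [hYdef, mem_ofPred_eq, not_le] at hy
      exact hy.le
  set Z : Set X := {x | h x ≠ none} with hZ
  have hZm : MeasurableSet Z := (hm none).compl
  have hνZ : e * (b / 2) ≤ ν.real Z := by
    have h1 := cnt_lower ν S (fun s => {y | s • y ∈ Z}) (fun s _ => measurable_const_smul s hZm)
      Y hYm (e * S.card) (fun y hy => hbb y hy (hcov y))
    simp only [hinv] at h1
    rw [Finset.sum_const, nsmul_eq_mul] at h1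
    have h2 : S.card * (e * ν.real Y) ≤ S.card * ν.real Z := by linarith
    have h3 := le_of_mul_le_mul_left h2 hcard
    have h4 : e * (b / 2) ≤ e * ν.real Y := by gcongr
    linarith
  -- centers
  set C : Set X := ⋃ s ∈ S, {y | h (s • y) = some s} with hC
  have hCm : MeasurableSet C := S.measurableSet_biUnion fun s _ => hmt s _
  have hsum : ∀ A : Set X, MeasurableSet A →
      ∑ s ∈ S, ν.real ({x | h x = some s} ∩ A) = ν.real (Z ∩ A) := by
    intro A hA
    rw [← measureReal_biUnion_finset]
    · congr 1
      ext x
      simp only [mem_iUnion, mem_inter_iff, hZ, mem_ofPred_eq]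
      constructor
      · rintro ⟨s, _, h1, h2⟩; exact ⟨by simp [h1], h2⟩
      · rintro ⟨h1, h2⟩
        obtain ⟨s, hs⟩ := Option.ne_none_iff_exists'.1 h1
        exact ⟨s, hr x s hs, hs, h2⟩
    · intro s _ s' _ hss
      refine Set.disjoint_left.2 fun x h1 h2 => hss ?_
      have h1 : h x = some s := h1.1
      have h2 : h x = some s' := h2.1
      rw [h1] at h2; exact Option.some.inj h2
    · intro s _; exact (hm _).inter hA
  have hsumZ : ∑ s ∈ S, ν.real {y | h (s • y) = some s} = ν.real Z := by
    have h1 := hsum univ MeasurableSet.univ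
    simp only [inter_univ] at h1
    rw [← h1]
    exact Finset.sum_congr rfl fun s _ => hinv s {x | h x = some s}
  have hC1 : (1 - e) * S.card * ν.real C ≤ 1 := by
    have h1 := cnt_lower ν S (fun s => {y | h (s • y) = some s}) (fun s _ => hmt s _) C hCm
      ((1 - e) * S.card) (fun y hy => ?_)
    · rw [hsumZ] at h1
      exact h1.trans measureReal_le_one
    · obtain ⟨s, hs, hy⟩ := mem_iUnion₂.1 hy
      exact (hc y s hs hy).1
  have hC2 : ν.real Z ≤ S.card * ν.real C := by
    have h1 := cnt_upper ν S (fun s => {y | h (s • y) = some s}) (fun s _ => hmt s _) C hCm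
      0 S.card (fun y hy => ?_) (fun y hy => ?_)
    · rw [hsumZ] at h1
      linarith
    · rw [zero_add]; exact cnt_le_card _ _ _
    · have : cnt S (fun s => {y | h (s • y) = some s}) y ≤ cnt S (fun s => (∅ : Set X)) y := by
        refine cnt_mono S fun s hs hh => ?_
        exact absurd (mem_iUnion₂.2 ⟨s, hs, hh⟩) hy
      simpa [cnt] using this
  -- gain
  have hgain : (b₀ / 4) * (e * (b₀ / 2)) ≤ ν.real (Z ∩ B) := by
    have h1 := cnt_lower ν S (fun s => {y | s • y ∈ {x | h x = some s} ∩ B})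
      (fun s _ => measurable_const_smul s ((hm _).inter hBm)) C hCm
      ((b₀ / 4) * S.card) (fun y hy => ?_)
    · simp only [hinv] at h1
      rw [hsum B hBm] at h1
      have h2 : e * (b₀ / 2) ≤ e * (b / 2) := by gcongr
      have h3 : (b₀ / 4) * (e * (b₀ / 2)) ≤ (b₀ / 4) * (S.card * ν.real C) := by
        exact mul_le_mul_of_nonneg_left (h2.trans (hνZ.trans hC2)) (by positivity)
      linarith
    · obtain ⟨s, hs, hy⟩ := mem_iUnion₂.1 hy
      obtain ⟨h1, h2, h3⟩ := hc y s hs hy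
      have h2 : (b / 2) * S.card ≤ cnt S (fun s => {y | s • y ∈ B}) y := h2
      have h4 : cnt S (fun s => {y | s • y ∈ B}) y ≤
          cnt S (fun s => {y | s • y ∈ {x | h x = some s} ∩ B}) y +
          cnt S (fun s => {y | h (s • y) = some s}ᶜ) y := by
        unfold cnt
        norm_cast
        rw [← Finset.card_union_of_disjoint]
        · refine Finset.card_le_card fun s hs => ?_
          simp only [Finset.mem_union, Finset.mem_filter, mem_ofPred_eq, mem_compl_iff,
            mem_inter_iff] at hs ⊢
          tauto
        · rw [Finset.disjoint_left]
          intro s hs hs'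
          simp only [Finset.mem_filter, mem_ofPred_eq, mem_compl_iff,
            mem_inter_iff] at hs hs'
          tauto
      have h5 := cnt_add_compl S (fun s => {y | h (s • y) = some s}) y
      have h6 : (b₀ / 4) * S.card ≤ (b / 2 - e) * S.card := by
        gcongr; linarith
      linarith
  -- the new tiles are good
  have hgood : GoodTiling F δ S h := by
    refine ⟨hm, hr, fun y => ?_⟩
    rcases Finset.eq_empty_or_nonempty (S.filter fun t => h (t • y) = some t) with h0 | ⟨s, hs⟩
    · rw [h0]; exact folner_empty _ _
    · rw [Finset.mem_filter] at hs
      have h1 := (hc y s hs.1 hs.2).1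
      refine folner_sub (δ' := δ / 4) (e := e) (S := S) hδ.le (Finset.filter_subset _ _) ?_
        (folner_mono Finset.subset_union_right (min_le_left _ _) hSf) ?_
      · refine h1.trans (le_of_eq ?_)
        unfold cnt
        congr 2
        ext t
        simp
      · nlinarith
  obtain ⟨D', g', hg', hA, hAA⟩ := overlay hg hgood
  refine ⟨D', g', hg', ?_⟩
  -- loss
  set bd : Finset G := S.filter (fun s => ¬ ∀ k ∈ DD ∪ F, k * s ∈ S) with hbd
  have hbdc : (bd.card : ℝ) ≤ η * S.card := (folner_iff _ _ _).1 hSf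
  set L : Set X := ⋃ d ∈ DD, ⋃ s ∈ bd, {x | d⁻¹ • x ∈ {z | h z = some s}} with hL
  have hνL : ν.real L ≤ κ := by
    have h1 : ν.real L ≤ ∑ d ∈ DD, ∑ s ∈ bd, ν.real C := by
      refine (measureReal_biUnion_finset_le _ _).trans (Finset.sum_le_sum fun d _ => ?_)
      refine (measureReal_biUnion_finset_le _ _).trans (Finset.sum_le_sum fun s hs => ?_)
      rw [hinv, ← hinv s {z | h z = some s}]
      refine measureReal_mono ?_ (measure_ne_top ν C)
      exact subset_biUnion_of_mem (u := fun s => {y | h (s • y) = some s})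
        (Finset.mem_filter.1 hs).1
    simp only [Finset.sum_const, nsmul_eq_mul] at h1
    have hCn : 0 ≤ ν.real C := measureReal_nonneg
    have h2 : (bd.card : ℝ) * ν.real C ≤ η * S.card * ν.real C := by gcongr
    have h3 : (S.card : ℝ) * ν.real C ≤ 2 := by
      have : 0 ≤ (S.card : ℝ) * ν.real C := by positivity
      have h31 : (1 / 2) * ((S.card : ℝ) * ν.real C) ≤ (1 - e) * (S.card * ν.real C) :=
        mul_le_mul_of_nonneg_right (by linarith) this
      linarith
    have h4 : (bd.card : ℝ) * ν.real C ≤ η * 2 := by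
      have : η * (S.card * ν.real C) ≤ η * 2 := by gcongr
      linarith
    have h5 : (DD.card : ℝ) * (bd.card * ν.real C) ≤ DD.card * (η * 2) := by gcongr
    have h6 : η * (2 * (DD.card + 1)) ≤ κ := by
      have : η ≤ κ / (2 * (DD.card + 1)) := min_le_right _ _
      rwa [le_div_iff₀ (by positivity)] at this
    have h7 : (DD.card : ℝ) * (η * 2) ≤ η * (2 * (DD.card + 1)) := by linarith
    exact h1.trans (h5.trans (h7.trans h6))
  have hincl : {x | g x ≠ none} ∪ (Z ∩ B) ⊆ {x | g' x ≠ none} ∪ L := by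
    rintro x (hx | hx)
    · by_cases hx' : g' x = none
      · right
        obtain ⟨t, ht⟩ := Option.ne_none_iff_exists'.1 hx
        have hhx : h x = none := by
          by_contra hne; exact hA x hne hx'
        have h1 : ¬ ∀ t' ∈ D, g (t' • t⁻¹ • x) = some t' → h (t' • t⁻¹ • x) = none :=
          fun hn => hAA x t ht hn hx'
        push Not at h1
        obtain ⟨t', ht'D, hgt', hht'⟩ := h1
        obtain ⟨s, hs⟩ := Option.ne_none_iff_exists'.1 hht'
        have hsS := hr _ _ hs
        have hd : t * t'⁻¹ ∈ DD := Finset.mem_image.2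
          ⟨(t, t'), Finset.mem_product.2 ⟨hg.range _ _ ht, ht'D⟩, rfl⟩
        refine mem_iUnion₂.2 ⟨t * t'⁻¹, hd, mem_iUnion₂.2 ⟨s, ?_, ?_⟩⟩
        · rw [hbd, Finset.mem_filter]
          refine ⟨hsS, fun hall => ?_⟩
          have h2 := hall _ (Finset.mem_union_left _ hd)
          have h3 := (hc (s⁻¹ • t' • t⁻¹ • x) s hsS (by simpa using hs)).2.2 _ h2
          apply h3
          rw [← hhx]
          congr 1
          simp [mul_smul]
        · show h ((t * t'⁻¹)⁻¹ • x) = some s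
          rw [← hs]; congr 1; simp [mul_smul]
      · exact Or.inl hx'
    · exact Or.inl (hA x hx.1)
  have h1 : ν.real ({x | g x ≠ none} ∪ (Z ∩ B)) = ν.real {x | g x ≠ none} + ν.real (Z ∩ B) := by
    refine measureReal_union ?_ (hZm.inter hBm)
    refine Set.disjoint_left.2 fun x h1 h2 => h1 h2.2
  have h2 := (measureReal_mono (μ := ν) hincl).trans (measureReal_union_le _ _)
  linarith

theorem exists_goodTiling {G X : Type*} [Group G] [MetricSpace X] [CompactSpace X]
    [MeasurableSpace X] [BorelSpace X] [MulAction G X] [ContinuousConstSMul G X]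
    (hG : AmenableGroup G) (hfree : FreeAction G X)
    (ν : Measure X) [IsProbabilityMeasure ν] [SMulInvariantMeasure G X ν]
    (F : Finset G) (δ : ℝ) (hδ : 0 < δ) (ε : ℝ) (hε : 0 < ε) :
    ∃ (D : Finset G) (g : X → Option G), GoodTiling F δ D g ∧
      ν.real {x | g x = none} < ε := by
  classical
  by_contra hcon
  push Not at hcon
  obtain ⟨γ, hγ, himp⟩ := improve hG hfree ν F δ hδ ε hε
  set A : Set ℝ := {r | ∃ (D : Finset G) (g : X → Option G), GoodTiling F δ D g ∧
    r = ν.real {x | g x ≠ none}} with hA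
  have hbdd : BddAbove A := ⟨1, by
    rintro r ⟨D, g, _, rfl⟩; exact measureReal_le_one⟩
  have hne : A.Nonempty := by
    refine ⟨_, ∅, fun _ => none, ⟨fun o => ?_, by simp, fun y => ?_⟩, rfl⟩
    · by_cases h : none = o <;> simp [h]
    · simpa using folner_empty F δ
  obtain ⟨r, ⟨D, g, hg, rfl⟩, hlt⟩ := exists_lt_of_lt_csSup hne
    (show sSup A - γ / 2 < sSup A by linarith)
  obtain ⟨D', g', hg', hle⟩ := himp D g hg (hcon D g hg) (γ / 4) (by positivity)
  have := le_csSup hbdd ⟨D', g', hg', rfl⟩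
  linarith


/-- An open castle with `(F,δ)`-invariant shapes and levels of diameter `< δ`. -/
structure OpenCastle {G X ι : Type*} [Group G] [MetricSpace X] [MulAction G X]
    (F : Finset G) (δ : ℝ) (T : ι → Finset G) (V : ι → Set X) : Prop where
  op : ∀ i, IsOpen (V i)
  disj : ∀ i j, ∀ s ∈ T i, ∀ t ∈ T j, ∀ x ∈ V i, ∀ y ∈ V j, s • x = t • y → i = j ∧ s = t
  fol : ∀ i, FolnerInv G F δ (T i)
  diam : ∀ i, ∀ t ∈ T i, Metric.diam (t • V i) < δ

theorem OpenCastle.comp {G X ι κ : Type*} [Group G] [MetricSpace X] [MulAction G X]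
    {F : Finset G} {δ : ℝ} {T : ι → Finset G} {V : ι → Set X} (h : OpenCastle F δ T V)
    (f : κ ≃ ι) : OpenCastle F δ (T ∘ f) (V ∘ f) where
  op i := h.op _
  disj i j s hs t ht x hx y hy hxy := by
    have := h.disj _ _ s hs t ht x hx y hy hxy
    exact ⟨f.injective this.1, this.2⟩
  fol i := h.fol _
  diam i := h.diam _

/-- The union of the levels of a castle. -/
def castleUnion {G X ι : Type*} [Group G] [MulAction G X]
    (T : ι → Finset G) (V : ι → Set X) : Set X := ⋃ i, (T i : Set G) • V i

theorem mem_castleUnion {G X ι : Type*} [Group G] [MulAction G X]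
    {T : ι → Finset G} {V : ι → Set X} {x : X} :
    x ∈ castleUnion T V ↔ ∃ i, ∃ t ∈ T i, ∃ y ∈ V i, t • y = x := by
  simp [castleUnion, Set.mem_smul]

theorem castleUnion_comp {G X ι κ : Type*} [Group G] [MulAction G X]
    (T : ι → Finset G) (V : ι → Set X) (f : κ ≃ ι) :
    castleUnion (T ∘ f) (V ∘ f) = castleUnion T V := by
  ext x
  rw [mem_castleUnion, mem_castleUnion]
  constructor
  · rintro ⟨i, h⟩; exact ⟨f i, h⟩
  · rintro ⟨i, h⟩; exact ⟨f.symm i, by simpa using h⟩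

theorem isOpen_castleUnion {G X ι : Type*} [Group G] [MetricSpace X] [MulAction G X]
    [ContinuousConstSMul G X]
    {T : ι → Finset G} {V : ι → Set X} (h : ∀ i, IsOpen (V i)) :
    IsOpen (castleUnion T V) :=
  isOpen_iUnion fun i => (h i).smul_left

theorem separate_compacts {X J : Type*} [TopologicalSpace X] [T2Space X] [Finite J]
    (K : J → Set X) (hK : ∀ j, IsCompact (K j)) (hd : ∀ i j, i ≠ j → Disjoint (K i) (K j)) :
    ∃ N : J → Set X, (∀ j, IsOpen (N j)) ∧ (∀ j, K j ⊆ N j) ∧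
      ∀ i j, i ≠ j → Disjoint (N i) (N j) := by
  classical
  have h : ∀ i j, ∃ U W : Set X, IsOpen U ∧ IsOpen W ∧ K i ⊆ U ∧ K j ⊆ W ∧
      (i ≠ j → Disjoint U W) := by
    intro i j
    by_cases hij : i = j
    · exact ⟨univ, univ, isOpen_univ, isOpen_univ, subset_univ _, subset_univ _,
        fun h => absurd hij h⟩
    · obtain ⟨U, W, a, b, c, d, e⟩ := SeparatedNhds.of_isCompact_isCompact (hK i) (hK j) (hd i j hij)
      exact ⟨U, W, a, b, c, d, fun _ => e⟩
  choose U W hU hW hKU hKW hUW using h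
  refine ⟨fun j => ⋂ i, (U j i ∩ W i j), fun j => ?_, fun j => ?_, fun i j hij => ?_⟩
  · exact isOpen_iInter_of_finite fun i => (hU j i).inter (hW i j)
  · exact subset_iInter fun i => subset_inter (hKU j i) (hKW i j)
  · refine (hUW i j hij).mono ?_ ?_
    · exact (iInter_subset _ j).trans inter_subset_left
    · exact (iInter_subset _ i).trans inter_subset_right

theorem exists_diam_cover {G X : Type*} [Group G] [MetricSpace X] [CompactSpace X]
    [MulAction G X] [ContinuousConstSMul G X] (D : Finset G) (δ : ℝ) (hδ : 0 < δ) :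
    ∃ (m : ℕ) (O : Fin m → Set X), (∀ k, IsOpen (O k)) ∧ (∀ x, ∃ k, x ∈ O k) ∧
      ∀ k, ∀ t ∈ D, Metric.diam (t • O k) < δ := by
  classical
  let U : X → Set X := fun x => ⋂ t ∈ D, (fun y => t • y) ⁻¹' Metric.ball (t • x) (δ / 3)
  have hU : ∀ x, IsOpen (U x) := fun x => isOpen_biInter_finset fun t _ =>
    Metric.isOpen_ball.preimage (continuous_const_smul t)
  have hxU : ∀ x, x ∈ U x := fun x => by
    simp only [U, mem_iInter]
    intro t _
    exact Metric.mem_ball_self (by positivity)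
  obtain ⟨c, hc⟩ := isCompact_univ.elim_finite_subcover U hU (fun x _ => mem_iUnion.2 ⟨x, hxU x⟩)
  refine ⟨c.card, fun k => U (c.equivFin.symm k).1, fun k => hU _, fun x => ?_, fun k t ht => ?_⟩
  · obtain ⟨z, hz, hx⟩ := mem_iUnion₂.1 (hc (mem_univ x))
    exact ⟨c.equivFin ⟨z, hz⟩, by simpa using hx⟩
  · set z : X := (c.equivFin.symm k).1
    have hsub : t • U z ⊆ Metric.ball (t • z) (δ / 3) := by
      rintro _ ⟨y, hy, rfl⟩
      simp only [U, mem_iInter] at hy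
      exact hy t ht
    calc Metric.diam (t • U z) ≤ Metric.diam (Metric.ball (t • z) (δ / 3)) :=
          Metric.diam_mono hsub Metric.isBounded_ball
      _ ≤ 2 * (δ / 3) := Metric.diam_ball (by positivity)
      _ < δ := by linarith

set_option maxHeartbeats 1000000 in
theorem exists_openCastle {G X : Type*} [Group G] [MetricSpace X] [CompactSpace X]
    [MeasurableSpace X] [BorelSpace X] [MulAction G X] [ContinuousConstSMul G X]
    (hG : AmenableGroup G) (hfree : FreeAction G X)
    (ν : Measure X) [IsProbabilityMeasure ν] [SMulInvariantMeasure G X ν]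
    (F : Finset G) (δ : ℝ) (hδ : 0 < δ) (ε : ℝ) (hε : 0 < ε) :
    ∃ (n : ℕ) (T : Fin n → Finset G) (V : Fin n → Set X), OpenCastle F δ T V ∧
      ν.real (castleUnion T V)ᶜ < ε := by
  classical
  obtain ⟨D, g, hg, hgε⟩ := exists_goodTiling hG hfree ν F δ hδ (ε / 2) (by positivity)
  obtain ⟨m, O, hO, hOc, hOd⟩ := exists_diam_cover (X := X) D δ hδ
  let P : Fin m → Set X := fun k => O k \ ⋃ j ∈ Finset.Iio k, O j
  have hP : ∀ x, ∃ k, x ∈ P k := by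
    intro x
    have hwf : WellFounded (fun a b : Fin m => a < b) := wellFounded_lt
    refine ⟨hwf.min {k | x ∈ O k} (hOc x), hwf.min_mem _ (hOc x), fun hx => ?_⟩
    obtain ⟨j, hj, hxj⟩ := mem_iUnion₂.1 hx
    exact hwf.not_lt_min {k | x ∈ O k} hxj (Finset.mem_Iio.1 hj)
  have hPd : ∀ j k x, x ∈ P j → x ∈ P k → j = k := by
    intro j k x hj hk
    by_contra hne
    rcases lt_or_gt_of_ne hne with h | h
    · exact hk.2 (mem_iUnion₂.2 ⟨j, Finset.mem_Iio.2 h, hj.1⟩)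
    · exact hj.2 (mem_iUnion₂.2 ⟨k, Finset.mem_Iio.2 h, hk.1⟩)
  have hPm : ∀ k, MeasurableSet (P k) := fun k =>
    (hO k).measurableSet.diff (Finset.measurableSet_biUnion _ fun j _ => (hO j).measurableSet)
  let sh : X → Finset G := fun y => D.filter fun t => g (t • y) = some t
  have hmt : ∀ (s : G) (o : Option G), MeasurableSet {y : X | g (s • y) = o} := fun s o =>
      measurable_const_smul s (hg.meas o)
  have hshm : ∀ T ∈ D.powerset, MeasurableSet {y | sh y = T} := by
    intro T hT
    have : {y | sh y = T} = ⋂ t ∈ D, (if t ∈ T then {y : X | g (t • y) = some t}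
        else {y : X | g (t • y) = some t}ᶜ) := by
      ext y
      simp only [mem_ofPred_eq, mem_iInter]
      constructor
      · rintro rfl t ht
        by_cases h : g (t • y) = some t <;> simp [sh, h, ht]
      · intro h
        ext t
        simp only [sh, Finset.mem_filter]
        constructor
        · rintro ⟨h1, h2⟩
          by_contra h3
          have := h t h1
          rw [if_neg h3] at this
          exact this h2
        · intro h1
          have hD := Finset.mem_powerset.1 hT h1
          have := h t hD
          rw [if_pos h1] at this
          exact ⟨hD, this⟩
    rw [this]
    refine D.measurableSet_biInter fun t _ => ?_
    split_ifs
    · exact hmt _ _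
    · exact (hmt _ _).compl
  let ι := {T // T ∈ D.powerset.filter (FolnerInv G F δ)} × Fin m
  let T : ι → Finset G := fun i => i.1.1
  have hTD : ∀ i, T i ⊆ D := fun i => Finset.mem_powerset.1 (Finset.mem_filter.1 i.1.2).1
  let base : ι → Set X := fun i => {y | sh y = T i} ∩ P i.2
  have hbm : ∀ i, MeasurableSet (base i) := fun i => (hshm _ (Finset.mem_filter.1 i.1.2).1).inter (hPm _)
  have hbt : ∀ i, ∀ y ∈ base i, ∀ t ∈ T i, g (t • y) = some t := by
    intro i y hy t ht
    have h1 : sh y = T i := hy.1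
    rw [← h1] at ht
    exact (Finset.mem_filter.1 ht).2
  set N : ℝ := ∑ i, ((T i).card : ℝ) with hN
  have hN0 : 0 ≤ N := Finset.sum_nonneg fun i _ => Nat.cast_nonneg _
  clear_value N
  set κ : ℝ := ε / (2 * (N + 1)) with hκ
  have hκ0 : 0 < κ := by positivity
  clear_value κ
  have hcomp : ∀ i, ∃ K ⊆ base i, IsCompact K ∧ ν.real (base i \ K) < κ := by
    intro i
    obtain ⟨K, hKs, hKc, hK⟩ := (hbm i).exists_isCompact_sdiff_lt (measure_ne_top ν _)
      (ε := ENNReal.ofReal κ) (ENNReal.ofReal_pos.2 hκ0).ne'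
    refine ⟨K, hKs, hKc, ?_⟩
    rw [Measure.real]
    exact (ENNReal.lt_ofReal_iff_toReal_lt (measure_ne_top _ _)).1 hK
  choose K hKs hKc hK using hcomp
  let L : ι × D → Set X := fun p => if (p.2 : G) ∈ T p.1 then (p.2 : G) • K p.1 else ∅
  have hLc : ∀ p, IsCompact (L p) := by
    intro p
    simp only [L]
    split_ifs
    · exact (hKc _).smul _
    · exact isCompact_empty
  have hLd : ∀ p q, p ≠ q → Disjoint (L p) (L q) := by
    rintro ⟨i, s⟩ ⟨j, t⟩ hpq
    rw [Set.disjoint_left]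
    intro x hx hx'
    simp only [L] at hx hx'
    split_ifs at hx with h1
    · split_ifs at hx' with h2
      · obtain ⟨y, hy, rfl⟩ := hx
        obtain ⟨z, hz, hyz⟩ := hx'
        have hyz : (t : G) • z = (s : G) • y := hyz
        have e1 := hbt i y (hKs i hy) s h1
        have e2 := hbt j z (hKs j hz) t h2
        rw [hyz, e1] at e2
        have hst : (s : G) = t := Option.some.inj e2
        rw [hst] at hyz
        have hzy : z = y := smul_left_cancel _ hyz
        subst hzy
        have a1 : i.1 = j.1 := by
          apply Subtype.ext
          have b1 : sh z = T i := (hKs i hy).1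
          have b2 : sh z = T j := (hKs j hz).1
          exact b1.symm.trans b2
        have a2 : i.2 = j.2 := hPd _ _ z (hKs i hy).2 (hKs j hz).2
        exact hpq (Prod.ext (Prod.ext a1 a2) (Subtype.ext hst))
      · exact hx'
    · exact hx
  obtain ⟨W, hWo, hLW, hWd⟩ := separate_compacts L hLc hLd
  let V : ι → Set X := fun i => O i.2 ∩ ⋂ t : D, (if (t : G) ∈ T i then
    (fun y => (t : G) • y) ⁻¹' W (i, t) else univ)
  have hVW : ∀ i, ∀ y ∈ V i, ∀ t (ht : t ∈ T i), t • y ∈ W (i, ⟨t, hTD i ht⟩) := by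
    intro i y hy t ht
    have := mem_iInter.1 hy.2 ⟨t, hTD i ht⟩
    simpa only [ht, if_true, mem_preimage] using this
  have hcastle : OpenCastle F δ T V := by
    refine ⟨fun i => ?_, ?_, fun i => ?_, fun i t ht => ?_⟩
    · refine (hO _).inter (isOpen_iInter_of_finite fun t => ?_)
      split_ifs
      · exact (hWo _).preimage (continuous_const_smul _)
      · exact isOpen_univ
    · intro i j s hs t ht x hx y hy hxy
      have h1 := hVW i x hx s hs
      have h2 := hVW j y hy t ht
      by_contra hne
      have h3 : ((i, ⟨s, hTD i hs⟩) : ι × D) ≠ (j, ⟨t, hTD j ht⟩) := by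
        intro h
        rw [Prod.mk.injEq, Subtype.mk.injEq] at h
        exact hne h
      exact (hWd _ _ h3).ne_of_mem h1 h2 hxy
    · exact (Finset.mem_filter.1 i.1.2).2
    · refine lt_of_le_of_lt (Metric.diam_mono ?_ ?_) (hOd i.2 t (hTD i ht))
      · exact Set.smul_set_mono inter_subset_left
      · exact (isCompact_univ.isBounded).subset (subset_univ _)
  have hmeas : ν.real (castleUnion T V)ᶜ < ε := by
    have hsub : (castleUnion T V)ᶜ ⊆ {x | g x = none} ∪
        ⋃ i ∈ (Finset.univ : Finset ι), ⋃ t ∈ T i, t • (base i \ K i) := by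
      intro x hx
      by_cases hgx : g x = none
      · exact Or.inl hgx
      right
      obtain ⟨t, ht⟩ := Option.ne_none_iff_exists'.1 hgx
      obtain ⟨k, hk⟩ := hP (t⁻¹ • x)
      let i : ι := (⟨sh (t⁻¹ • x), Finset.mem_filter.2
        ⟨Finset.mem_powerset.2 (Finset.filter_subset _ _), hg.fol _⟩⟩, k)
      have hti : t ∈ T i := Finset.mem_filter.2 ⟨hg.range _ _ ht, by simpa using ht⟩
      have hyb : t⁻¹ • x ∈ base i := ⟨rfl, hk⟩
      refine mem_iUnion₂.2 ⟨i, Finset.mem_univ _, mem_iUnion₂.2 ⟨t, hti, ?_⟩⟩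
      refine ⟨t⁻¹ • x, ⟨hyb, fun hyK => hx ?_⟩, by simp⟩
      rw [mem_castleUnion]
      refine ⟨i, t, hti, t⁻¹ • x, ⟨hk.1, ?_⟩, by simp⟩
      refine mem_iInter.2 fun s => ?_
      split_ifs with hs
      · apply hLW
        simp only [L]
        rw [if_pos hs]
        exact ⟨_, hyK, rfl⟩
      · trivial
    have h1 := (measureReal_mono (μ := ν) hsub).trans (measureReal_union_le _ _)
    have h2 : ν.real (⋃ i ∈ (Finset.univ : Finset ι), ⋃ t ∈ T i, t • (base i \ K i)) ≤
        ∑ i : ι, ∑ t ∈ T i, κ := by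
      refine (measureReal_biUnion_finset_le _ _).trans (Finset.sum_le_sum fun i _ => ?_)
      refine (measureReal_biUnion_finset_le _ _).trans (Finset.sum_le_sum fun t ht => ?_)
      have : ν.real (t • (base i \ K i)) = ν.real (base i \ K i) :=
        congrArg ENNReal.toReal (measure_smul ν t _)
      rw [this]; exact (hK i).le
    have h3 : ∑ i : ι, ∑ t ∈ T i, κ = N * κ := by
      simp only [Finset.sum_const, nsmul_eq_mul]
      rw [hN, Finset.sum_mul]
    have h4 : (N + 1) * κ = ε / 2 := by rw [hκ]; field_simp
    linarith
  let f : Fin (Fintype.card ι) ≃ ι := (Fintype.equivFin ι).symm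
  exact ⟨_, T ∘ f, V ∘ f, hcastle.comp f, by rw [castleUnion_comp]; exact hmeas⟩


theorem avg_aux {a b x y m : ℝ} (ha : 0 < a) (hb : 0 < b) (hab : a + b = 1) (hy : y ≤ m)
    (h : m = a * x + b * y) : m ≤ x := by
  have h1 : b * y ≤ b * m := mul_le_mul_of_nonneg_left hy hb.le
  have h2 : a * m ≤ a * x := by
    have : (a + b) * m = m := by rw [hab, one_mul]
    nlinarith
  exact le_of_mul_le_mul_left h2 ha

theorem smulInv_of_inv {G X : Type*} [Group G] [MetricSpace X]
    [MeasurableSpace X] [BorelSpace X] [MulAction G X] [ContinuousConstSMul G X]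
    {μ : ProbabilityMeasure X} (h : InvariantMeasure G X μ) :
    SMulInvariantMeasure G X (μ : Measure X) := by
  constructor
  intro g s hs
  conv_rhs => rw [← h g]
  rw [Measure.map_apply (measurable_const_smul g) hs]

theorem inv_of_smulInv {G X : Type*} [Group G] [MetricSpace X]
    [MeasurableSpace X] [BorelSpace X] [MulAction G X] [ContinuousConstSMul G X]
    {μ : ProbabilityMeasure X} (h : SMulInvariantMeasure G X (μ : Measure X)) :
    InvariantMeasure G X μ := by
  intro g
  ext s hs
  rw [Measure.map_apply (measurable_const_smul g) hs]
  exact h.measure_preimage_smul g hs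

theorem isClosed_MG {G X : Type*} [Group G] [MetricSpace X] [CompactSpace X]
    [MeasurableSpace X] [BorelSpace X] [MulAction G X] [ContinuousConstSMul G X] :
    IsClosed (MG G X) := by
  have : MG G X = ⋂ g : G, {μ : ProbabilityMeasure X |
      μ.map (f := fun x => g • x) (measurable_const_smul g).aemeasurable = μ} := by
    ext μ
    simp only [MG, InvariantMeasure, mem_ofPred_eq, mem_iInter]
    refine forall_congr' fun g => ?_
    rw [← ProbabilityMeasure.toMeasure_injective.eq_iff]
    rfl
  rw [this]
  refine isClosed_iInter fun g => ?_
  exact isClosed_eq (ProbabilityMeasure.continuous_map (continuous_const_smul g)) continuous_id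

theorem isOpen_measure_closed_lt {X : Type*} [MetricSpace X]
    [MeasurableSpace X] [BorelSpace X] {C : Set X} (hC : IsClosed C) (r : ℝ) :
    IsOpen {μ : ProbabilityMeasure X | (μ : Measure X).real C < r} := by
  rw [isOpen_iff_mem_nhds]
  intro μ hμ
  have h1 : Filter.limsup (fun ν : ProbabilityMeasure X => (ν : Measure X) C) (nhds μ) ≤
      (μ : Measure X) C :=
    ProbabilityMeasure.limsup_measure_closed_le_of_tendsto Filter.tendsto_id hC
  have hr : 0 < r := lt_of_le_of_lt measureReal_nonneg hμ
  have h2 : (μ : Measure X) C < ENNReal.ofReal r := by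
    rw [ENNReal.lt_ofReal_iff_toReal_lt (measure_ne_top _ _)]; exact hμ
  filter_upwards [Filter.eventually_lt_of_limsup_lt (h1.trans_lt h2)] with ν hν
  rw [ENNReal.lt_ofReal_iff_toReal_lt (measure_ne_top _ _)] at hν
  exact hν

theorem continuous_integral_cont {X : Type*} [MetricSpace X] [CompactSpace X]
    [MeasurableSpace X] [BorelSpace X] (f : C(X, ℝ)) :
    Continuous (fun μ : ProbabilityMeasure X => ∫ x, f x ∂(μ : Measure X)) :=
  ProbabilityMeasure.continuous_integral_boundedContinuousFunction
    (BoundedContinuousFunction.mkOfCompact f)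

theorem pm_ext {X : Type*} [MetricSpace X] [CompactSpace X]
    [MeasurableSpace X] [BorelSpace X] {μ ν : ProbabilityMeasure X}
    (h : ∀ f : C(X, ℝ), ∫ x, f x ∂(μ : Measure X) = ∫ x, f x ∂(ν : Measure X)) : μ = ν := by
  apply ProbabilityMeasure.toMeasure_injective
  exact ext_of_forall_integral_eq_of_IsFiniteMeasure fun f => h f.toContinuousMap

theorem integrable_cont {X : Type*} [MetricSpace X] [CompactSpace X]
    [MeasurableSpace X] [BorelSpace X] {f : X → ℝ} (hf : Continuous f) (μ : Measure X)
    [IsFiniteMeasure μ] :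
    Integrable f μ :=
  (BoundedContinuousFunction.mkOfCompact ⟨f, hf⟩).integrable μ

/-- conditional measure on an invariant set -/
theorem cond_invariant {G X : Type*} [Group G] [MetricSpace X]
    [MeasurableSpace X] [BorelSpace X] [MulAction G X] [ContinuousConstSMul G X]
    (μ : Measure X) [IsProbabilityMeasure μ] [SMulInvariantMeasure G X μ]
    {A : Set X} (hA : MeasurableSet A) (hinv : ∀ g : G, g • A = A) :
    SMulInvariantMeasure G X (ProbabilityTheory.cond μ A) := by
  constructor
  intro g s hs
  rw [ProbabilityTheory.cond_apply hA, ProbabilityTheory.cond_apply hA]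
  congr 1
  have : A ∩ (fun x => g • x) ⁻¹' s = (fun x => g • x) ⁻¹' (A ∩ s) := by
    ext x
    simp only [mem_inter_iff, mem_preimage]
    have : g • x ∈ A ↔ x ∈ A := by
      conv_lhs => rw [← hinv g]
      exact smul_mem_smul_set_iff
    rw [this]
  rw [this]
  exact SMulInvariantMeasure.measure_preimage_smul g (hA.inter hs)

theorem integral_cond_split {X : Type*} [MetricSpace X] [CompactSpace X]
    [MeasurableSpace X] [BorelSpace X]
    (μ : Measure X) [IsProbabilityMeasure μ]
    {A : Set X} (hA : MeasurableSet A) (h0 : μ A ≠ 0) (h1 : μ Aᶜ ≠ 0) (f : X → ℝ)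
    (hf : Integrable f μ) :
    ∫ x, f x ∂μ = μ.real A * ∫ x, f x ∂(ProbabilityTheory.cond μ A) +
      μ.real Aᶜ * ∫ x, f x ∂(ProbabilityTheory.cond μ Aᶜ) := by
  have key : ∀ B : Set X, μ B ≠ 0 →
      μ.real B * ∫ x, f x ∂(ProbabilityTheory.cond μ B) = ∫ x in B, f x ∂μ := by
    intro B hB
    rw [ProbabilityTheory.cond, integral_smul_measure, ENNReal.toReal_inv, smul_eq_mul,
      ← mul_assoc]
    have : μ.real B ≠ 0 := by
      rw [Measure.real, Ne, ENNReal.toReal_eq_zero_iff]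
      simp [hB]
    change μ.real B * (μ.real B)⁻¹ * _ = _
    rw [mul_inv_cancel₀ this, one_mul]
  rw [key A h0, key _ h1]
  exact (integral_add_compl hA hf).symm

theorem measure_le_of_ergodic {G X : Type*} [Group G] [MetricSpace X] [CompactSpace X]
    [MeasurableSpace X] [BorelSpace X] [MulAction G X] [ContinuousConstSMul G X]
    {C : Set X} (hC : IsClosed C) (r : ℝ)
    (h : ∀ ν ∈ EG G X, (ν : Measure X).real C ≤ r) :
    ∀ μ ∈ MG G X, (μ : Measure X).real C ≤ r := by
  classical
  intro μ₁ hμ₁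
  have husc : UpperSemicontinuousOn (fun μ : ProbabilityMeasure X => (μ : Measure X).real C)
      (MG G X) := by
    apply UpperSemicontinuous.upperSemicontinuousOn
    rw [upperSemicontinuous_iff_isOpen_preimage]
    intro y
    exact isOpen_measure_closed_lt hC y
  have hcM : IsCompact (MG G X) := (isClosed_MG (G := G) (X := X)).isCompact
  obtain ⟨μ₀, hμ₀, hmax⟩ := UpperSemicontinuousOn.exists_isMaxOn ⟨μ₁, hμ₁⟩ hcM husc
  set m := (μ₀ : Measure X).real C with hm
  have hmax' : ∀ μ ∈ MG G X, (μ : Measure X).real C ≤ m := fun μ hμ => hmax hμ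
  let K₀ : Set (ProbabilityMeasure X) := MG G X ∩ {μ | (μ : Measure X).real C < m}ᶜ
  have hK₀ : IsCompact K₀ := hcM.inter_right (isOpen_measure_closed_lt hC m).isClosed_compl
  let Φ : ProbabilityMeasure X → (C(X, ℝ) → ℝ) := fun μ f => ∫ x, f x ∂(μ : Measure X)
  have hΦ : Continuous Φ := continuous_pi fun f => continuous_integral_cont f
  have hμ₀K : μ₀ ∈ K₀ := ⟨hμ₀, by simp [hm]⟩
  obtain ⟨p, hp⟩ := (hK₀.image hΦ).extremePoints_nonempty ⟨_, μ₀, hμ₀K, rfl⟩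
  obtain ⟨⟨μ, hμK, rfl⟩, hext⟩ := mem_extremePoints.1 hp
  have hμC : (μ : Measure X).real C = m := le_antisymm (hmax' μ hμK.1) (not_lt.1 hμK.2)
  suffices hE : μ ∈ EG G X by
    exact (hmax' μ₁ hμ₁).trans (hμC ▸ h μ hE)
  refine ⟨hμK.1, fun A hA hinv => ?_⟩
  by_contra hcon
  push Not at hcon
  obtain ⟨hA0, hA1⟩ := hcon
  have := smulInv_of_inv hμK.1
  have h0 : (μ : Measure X) A ≠ 0 := by
    intro h; exact hA0 (by change ((μ : Measure X) A).toNNReal = 0; rw [h]; rfl)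
  have h1 : (μ : Measure X) Aᶜ ≠ 0 := by
    intro h
    rw [prob_compl_eq_zero_iff hA] at h
    exact hA1 (by change ((μ : Measure X) A).toNNReal = 1; rw [h]; rfl)
  have hinvc : ∀ g : G, g • Aᶜ = Aᶜ := fun g => by rw [smul_set_compl, hinv]
  have i1 : IsProbabilityMeasure (ProbabilityTheory.cond (μ : Measure X) A) :=
    ProbabilityTheory.cond_isProbabilityMeasure h0
  have i2 : IsProbabilityMeasure (ProbabilityTheory.cond (μ : Measure X) Aᶜ) :=
    ProbabilityTheory.cond_isProbabilityMeasure h1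
  let ν₁ : ProbabilityMeasure X := ⟨ProbabilityTheory.cond (μ : Measure X) A, i1⟩
  let ν₂ : ProbabilityMeasure X := ⟨ProbabilityTheory.cond (μ : Measure X) Aᶜ, i2⟩
  have hν₁ : ν₁ ∈ MG G X := inv_of_smulInv (cond_invariant (G := G) (μ : Measure X) hA hinv)
  have hν₂ : ν₂ ∈ MG G X := inv_of_smulInv (cond_invariant (G := G) (μ : Measure X) hA.compl hinvc)
  set a := (μ : Measure X).real A with ha
  set b := (μ : Measure X).real Aᶜ with hb
  have ha0 : 0 < a := ENNReal.toReal_pos h0 (measure_ne_top _ _)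
  have hb0 : 0 < b := ENNReal.toReal_pos h1 (measure_ne_top _ _)
  have hab : a + b = 1 := by
    rw [ha, hb, probReal_compl_eq_one_sub hA]; ring
  have hsplit : ∀ f : X → ℝ, Integrable f (μ : Measure X) →
      ∫ x, f x ∂(μ : Measure X) = a * ∫ x, f x ∂(ν₁ : Measure X) +
        b * ∫ x, f x ∂(ν₂ : Measure X) := fun f hf =>
    integral_cond_split (μ : Measure X) hA h0 h1 f hf
  have hCs := hsplit (C.indicator 1) ((integrable_const (1:ℝ)).indicator hC.measurableSet)
  rw [integral_indicator_one hC.measurableSet, integral_indicator_one hC.measurableSet,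
    integral_indicator_one hC.measurableSet, hμC] at hCs
  have e1 := hmax' ν₁ hν₁
  have e2 := hmax' ν₂ hν₂
  have k1 : ν₁ ∈ K₀ := by
    refine ⟨hν₁, ?_⟩
    simp only [mem_compl_iff, mem_ofPred_eq, not_lt]
    exact avg_aux ha0 hb0 hab e2 hCs
  have k2 : ν₂ ∈ K₀ := by
    refine ⟨hν₂, ?_⟩
    simp only [mem_compl_iff, mem_ofPred_eq, not_lt]
    exact avg_aux hb0 ha0 (by linarith) e1 (by linarith)
  have hseg : Φ μ ∈ openSegment ℝ (Φ ν₁) (Φ ν₂) := by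
    refine ⟨a, b, ha0, hb0, hab, ?_⟩
    funext f
    exact (hsplit f (integrable_cont f.continuous _)).symm
  have heq := hext (Φ ν₁) ⟨ν₁, k1, rfl⟩ (Φ ν₂) ⟨ν₂, k2, rfl⟩ hseg
  have : ν₁ = μ := pm_ext fun f => congrFun heq.1 f
  have hA' : (ν₁ : Measure X) Aᶜ = 0 := by
    change ProbabilityTheory.cond (μ : Measure X) A Aᶜ = 0
    rw [ProbabilityTheory.cond_apply hA]; simp
  rw [this] at hA'
  exact h1 hA'

theorem ergodic_ae_const_set {G X : Type*} [Group G] [Countable G] [MetricSpace X]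
    [MeasurableSpace X] [BorelSpace X] [MulAction G X] [ContinuousConstSMul G X]
    {ν : ProbabilityMeasure X} (hν : ν ∈ EG G X) {s : Set X} (hs : MeasurableSet s)
    (h : ∀ g : G, (fun x => g • x) ⁻¹' s =ᵐ[(ν : Measure X)] s) :
    (∀ᵐ x ∂(ν : Measure X), x ∈ s) ∨ (∀ᵐ x ∂(ν : Measure X), x ∉ s) := by
  let s' : Set X := ⋂ g : G, (fun x => g • x) ⁻¹' s
  have hs' : MeasurableSet s' := MeasurableSet.iInter fun g => measurable_const_smul g hs
  have heq : s' =ᵐ[(ν : Measure X)] s := by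
    have h1 := Filter.EventuallyEq.countable_iInter h
    rwa [iInter_const] at h1
  have hinv : ∀ g : G, g • s' = s' := by
    intro g
    ext x
    rw [mem_smul_set_iff_inv_smul_mem]
    simp only [s', mem_iInter, mem_preimage, smul_smul]
    exact ⟨fun h k => by simpa using h (k * g), fun h k => h _⟩
  have hc := hν.2 s' hs' hinv
  have conv : ∀ a : NNReal, ν s' = a → (ν : Measure X) s' = a := by
    intro a ha
    rw [← ProbabilityMeasure.ennreal_coeFn_eq_coeFn_toMeasure, ha]
  rcases hc with h0 | h1
  · right
    have h0' := conv 0 h0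
    rw [measure_congr heq] at h0'
    rw [ae_iff]; simpa using h0'
  · left
    have h1' := conv 1 h1
    rw [measure_congr heq] at h1'
    exact (prob_compl_eq_zero_iff hs).2 (by simpa using h1')

/-- coboundary -/
noncomputable def cob {G X : Type*} [Group G] [MetricSpace X] [MulAction G X]
    [ContinuousConstSMul G X] (g : G) (v : C(X, ℝ)) : C(X, ℝ) :=
  ⟨fun x => v (g • x) - v x, by fun_prop⟩

/-- span of coboundaries -/
noncomputable def cobSpan (G X : Type*) [Group G] [MetricSpace X] [MulAction G X]
    [ContinuousConstSMul G X] : Submodule ℝ C(X, ℝ) :=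
  Submodule.span ℝ {u | ∃ (g : G) (v : C(X, ℝ)), u = cob g v}

theorem integral_smul_eq {G X : Type*} [Group G] [MetricSpace X]
    [MeasurableSpace X] [BorelSpace X] [MulAction G X] [ContinuousConstSMul G X]
    (ν : Measure X) [SMulInvariantMeasure G X ν] (g : G) (f : X → ℝ) :
    ∫ x, f (g • x) ∂ν = ∫ x, f x ∂ν :=
  (measurePreserving_smul g ν).integral_comp (measurableEmbedding_const_smul g) f

theorem integral_cobSpan {G X : Type*} [Group G] [MetricSpace X] [CompactSpace X]
    [MeasurableSpace X] [BorelSpace X] [MulAction G X] [ContinuousConstSMul G X]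
    (ν : Measure X) [IsProbabilityMeasure ν] [SMulInvariantMeasure G X ν]
    {u : C(X, ℝ)} (hu : u ∈ cobSpan G X) : ∫ x, u x ∂ν = 0 := by
  induction hu using Submodule.span_induction with
  | mem u h =>
    obtain ⟨g, v, rfl⟩ := h
    change ∫ x, (v (g • x) - v x) ∂ν = 0
    rw [integral_sub (integrable_cont (by fun_prop) ν) (integrable_cont (by fun_prop) ν),
      integral_smul_eq ν g v, sub_self]
  | zero => simp
  | add x y hx hy h1 h2 =>
    simp only [ContinuousMap.add_apply]
    rw [integral_add (integrable_cont (by fun_prop) ν) (integrable_cont (by fun_prop) ν), h1, h2,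
      add_zero]
  | smul a x hx h =>
    simp only [ContinuousMap.smul_apply, smul_eq_mul]
    rw [integral_const_mul, h, mul_zero]

theorem exists_cob_approx {G X : Type*} [Group G] [Countable G] [MetricSpace X] [CompactSpace X]
    [MeasurableSpace X] [BorelSpace X] [MulAction G X] [ContinuousConstSMul G X]
    {ν : ProbabilityMeasure X} (hν : ν ∈ EG G X) (f : C(X, ℝ)) (η : ℝ) (hη : 0 < η) :
    ∃ (u : C(X, ℝ)) (c : ℝ), u ∈ cobSpan G X ∧ ∫ x, (f x - c - u x) ^ 2 ∂(ν : Measure X) < η := by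
  have := smulInv_of_inv hν.1
  set μ : Measure X := (ν : Measure X) with hμ
  let L : C(X, ℝ) →L[ℝ] Lp ℝ 2 μ := ContinuousMap.toLp 2 μ ℝ
  let M : Submodule ℝ (Lp ℝ 2 μ) := ((cobSpan G X).map L.toLinearMap).topologicalClosure
  have hMc : CompleteSpace M := (Submodule.isClosed_topologicalClosure _).completeSpace_coe
  set p := M.starProjection (L f) with hp
  have hpM : p ∈ M := Submodule.starProjection_apply_mem _ _
  set w := L f - p with hw
  have horth : ∀ g : G, ∀ v : C(X, ℝ), inner ℝ w (L (cob g v)) = 0 := by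
    intro g v
    apply Submodule.starProjection_inner_eq_zero
    apply Submodule.le_topologicalClosure
    exact ⟨_, Submodule.subset_span ⟨g, v, rfl⟩, rfl⟩
  have hwmem : MemLp w 2 μ := Lp.memLp w
  have hinner : ∀ (a : Lp ℝ 2 μ) (v : C(X, ℝ)), inner ℝ a (L v) = ∫ x, a x * v x ∂μ := by
    intro a v
    rw [L2.inner_def]
    apply integral_congr_ae
    filter_upwards [ContinuousMap.coeFn_toLp (E := ℝ) (p := 2) (𝕜 := ℝ) μ v] with x hx
    change inner ℝ (a x) ((ContinuousMap.toLp 2 μ ℝ v) x) = _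
    rw [hx]
    simp [mul_comm]
  have hIntg : ∀ (a : X → ℝ), MemLp a 2 μ → ∀ v : C(X, ℝ), Integrable (fun x => a x * v x) μ := by
    intro a ha v
    have hv : MemLp (fun x => v x) 2 μ := by
      refine MemLp.of_bound v.continuous.aestronglyMeasurable ‖v‖ ?_
      exact Filter.Eventually.of_forall fun x => v.norm_coe_le_norm x
    exact MemLp.integrable_mul ha hv
  have hwinv : ∀ g : G, (fun x => w (g • x)) =ᵐ[μ] w := by
    intro g
    have hm : MemLp (fun x => w (g • x)) 2 μ := hwmem.comp_measurePreserving (measurePreserving_smul g μ)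
    have hd : MemLp (fun x => w (g • x) - w x) 2 μ := hm.sub hwmem
    have hz : hd.toLp _ = 0 := by
      apply (ContinuousMap.toLp_denseRange (E := ℝ) (p := 2) (μ := μ) ℝ
        (by norm_num)).eq_zero_of_inner_left ℝ
      intro v
      change inner ℝ _ (L v) = 0
      rw [hinner]
      have h1 : ∫ x, (hd.toLp _) x * v x ∂μ = ∫ x, (w (g • x) - w x) * v x ∂μ := by
        apply integral_congr_ae
        filter_upwards [hd.coeFn_toLp] with x hx
        rw [hx]
      rw [h1]
      simp only [sub_mul]
      rw [integral_sub (hIntg _ hm v) (hIntg _ hwmem v)]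
      have h2 : ∫ x, w (g • x) * v x ∂μ = ∫ x, w x * v (g⁻¹ • x) ∂μ := by
        rw [← integral_smul_eq μ g (fun x => w x * v (g⁻¹ • x))]
        simp
      have h3 := horth g⁻¹ v
      rw [hinner] at h3
      have h4 : ∫ x, w x * (cob g⁻¹ v) x ∂μ = ∫ x, w x * v (g⁻¹ • x) ∂μ - ∫ x, w x * v x ∂μ := by
        have h6 : Integrable (fun x => w x * v (g⁻¹ • x)) μ :=
          hIntg _ hwmem ⟨fun x => v (g⁻¹ • x), by fun_prop⟩
        rw [← integral_sub h6 (hIntg _ hwmem v)]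
        congr 1; funext x
        change w x * (v (g⁻¹ • x) - v x) = w x * v (g⁻¹ • x) - w x * v x
        ring
      rw [h4] at h3
      rw [h2]; exact h3
    have := hd.coeFn_toLp
    rw [hz] at this
    filter_upwards [this, Lp.coeFn_zero ℝ 2 μ] with x h1 h2
    rw [h2] at h1
    simpa [sub_eq_zero] using h1.symm
  obtain ⟨c, hc⟩ : ∃ c, w =ᵐ[μ] Function.const X c := by
    refine Filter.exists_eventuallyEq_const_of_forall_separating MeasurableSet fun U hU => ?_
    refine ergodic_ae_const_set hν (s := w ⁻¹' U) ((Lp.stronglyMeasurable w).measurable hU) ?_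
    intro g
    refine ((hwinv g).mono fun x hx => ?_).set_eq
    change w (g • x) ∈ U ↔ w x ∈ U
    rw [show w (g • x) = w x from hx]
  let k : C(X, ℝ) := ContinuousMap.const X c
  have hwk : w = L k := by
    apply Lp.ext
    filter_upwards [hc, ContinuousMap.coeFn_toLp (E := ℝ) (p := 2) (𝕜 := ℝ) μ k] with x h1 h2
    rw [h1]; exact h2.symm
  have hcl : p ∈ closure ((cobSpan G X).map L.toLinearMap : Set (Lp ℝ 2 μ)) := hpM
  obtain ⟨_, ⟨u, hu, rfl⟩, hdist⟩ := Metric.mem_closure_iff.1 hcl (Real.sqrt η) (Real.sqrt_pos.2 hη)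
  refine ⟨u, c, hu, ?_⟩
  have e : p - L u = L (f - k - u) := by
    rw [map_sub, map_sub, ← hwk, hw]; abel
  have h5 : ∫ x, (f x - c - u x) ^ 2 ∂μ = inner ℝ (L (f - k - u)) (L (f - k - u)) := by
    have := ContinuousMap.inner_toLp (𝕜 := ℝ) μ (f - k - u) (f - k - u)
    change inner ℝ (L (f - k - u)) (L (f - k - u)) = _ at this
    rw [this]
    congr 1; funext x
    simp [k, sq]
  rw [h5, ← e, real_inner_self_eq_norm_sq]
  rw [dist_eq_norm] at hdist
  have h6 : ‖p - L u‖ < Real.sqrt η := hdist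
  calc ‖p - L u‖ ^ 2 < Real.sqrt η ^ 2 := by gcongr
    _ = η := Real.sq_sqrt hη.le

/-- averages over a finite set -/
noncomputable def avg {G X : Type*} [Group G] [MulAction G X] (S : Finset G) (f : X → ℝ) (x : X) :
    ℝ := (S.card : ℝ)⁻¹ * ∑ s ∈ S, f (s • x)

theorem avg_cob {G X : Type*} [Group G] [MetricSpace X] [CompactSpace X] [MulAction G X]
    [ContinuousConstSMul G X] (g : G) (v : C(X, ℝ)) {S : Finset G} {δ : ℝ} (hS : S.Nonempty)
    (hF : FolnerInv G {g} δ S) (x : X) : |avg S (cob g v) x| ≤ 2 * δ * ‖v‖ := by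
  classical
  have hcard : (0 : ℝ) < S.card := by exact_mod_cast hS.card_pos
  rw [folner_iff] at hF
  let S' := S.image (fun s => g * s)
  have hc : S'.card = S.card := Finset.card_image_of_injective _ (mul_right_injective g)
  have h1 : ∑ s ∈ S, cob g v (s • x) = ∑ s ∈ S', v (s • x) - ∑ s ∈ S, v (s • x) := by
    rw [Finset.sum_image (fun a _ b _ h => mul_right_injective g h), ← Finset.sum_sub_distrib]
    refine Finset.sum_congr rfl fun s _ => ?_
    change v (g • s • x) - v (s • x) = _
    rw [smul_smul]
  have hb : ((S' \ S).card : ℝ) ≤ δ * S.card := by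
    refine le_trans ?_ hF
    have : S' \ S ⊆ (S.filter (fun s => ¬ ∀ k ∈ ({g} : Finset G), k * s ∈ S)).image
        (fun s => g * s) := by
      intro y hy
      obtain ⟨hy1, hy2⟩ := Finset.mem_sdiff.1 hy
      obtain ⟨s, hs, rfl⟩ := Finset.mem_image.1 hy1
      exact Finset.mem_image.2 ⟨s, Finset.mem_filter.2 ⟨hs, by simpa using hy2⟩, rfl⟩
    exact_mod_cast (Finset.card_le_card this).trans Finset.card_image_le
  have hb' : ((S \ S').card : ℝ) ≤ δ * S.card := by
    rw [Finset.card_sdiff_comm hc.symm]; exact hb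
  have hsum : ∀ A : Finset G, |∑ s ∈ A, v (s • x)| ≤ A.card * ‖v‖ := by
    intro A
    refine (Finset.abs_sum_le_sum_abs _ _).trans ?_
    refine (Finset.sum_le_card_nsmul _ _ ‖v‖ fun s _ => v.norm_coe_le_norm _).trans ?_
    rw [nsmul_eq_mul]
  have h2 : |∑ s ∈ S, cob g v (s • x)| ≤ 2 * δ * ‖v‖ * S.card := by
    rw [h1, ← Finset.sum_sdiff_sub_sum_sdiff]
    have e1 := hsum (S' \ S)
    have e2 := hsum (S \ S')
    have e3 := abs_sub (∑ s ∈ S' \ S, v (s • x)) (∑ s ∈ S \ S', v (s • x))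
    have e4 : ((S' \ S).card : ℝ) * ‖v‖ ≤ δ * S.card * ‖v‖ := by gcongr
    have e5 : ((S \ S').card : ℝ) * ‖v‖ ≤ δ * S.card * ‖v‖ := by gcongr
    linarith
  rw [avg, abs_mul, abs_of_pos (inv_pos.2 hcard), inv_mul_le_iff₀ hcard]
  linarith

theorem avg_add {G X : Type*} [Group G] [MulAction G X] (S : Finset G) (f h : X → ℝ) (x : X) :
    avg S (fun y => f y + h y) x = avg S f x + avg S h x := by
  simp only [avg, Finset.sum_add_distrib, mul_add]

theorem avg_smul {G X : Type*} [Group G] [MulAction G X] (S : Finset G) (a : ℝ) (f : X → ℝ)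
    (x : X) : avg S (fun y => a * f y) x = a * avg S f x := by
  simp only [avg, ← Finset.mul_sum]; ring

theorem avg_const {G X : Type*} [Group G] [MulAction G X] {S : Finset G} (hS : S.Nonempty) (a : ℝ)
    (x : X) : avg S (fun _ => a) x = a := by
  have hcard : (S.card : ℝ) ≠ 0 := by exact_mod_cast hS.card_pos.ne'
  simp only [avg, Finset.sum_const, nsmul_eq_mul]
  field_simp

theorem continuous_avg {G X : Type*} [Group G] [MetricSpace X] [MulAction G X]
    [ContinuousConstSMul G X] (S : Finset G) {f : X → ℝ} (hf : Continuous f) :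
    Continuous (avg S f) := by
  unfold avg
  exact continuous_const.mul (continuous_finsetSum _ fun s _ => hf.comp (continuous_const_smul s))

theorem avg_cobSpan {G X : Type*} [Group G] [MetricSpace X] [CompactSpace X] [MulAction G X]
    [ContinuousConstSMul G X] {u : C(X, ℝ)} (hu : u ∈ cobSpan G X) :
    ∀ η : ℝ, 0 < η → ∃ (K : Finset G) (δ : ℝ), 0 < δ ∧ ∀ S : Finset G, S.Nonempty →
      FolnerInv G K δ S → ∀ x : X, |avg S u x| ≤ η := by
  classical
  induction hu using Submodule.span_induction with
  | mem u h =>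
    obtain ⟨g, v, rfl⟩ := h
    intro η hη
    refine ⟨{g}, η / (2 * (‖v‖ + 1)), by positivity, fun S hS hF x => ?_⟩
    refine (avg_cob g v hS hF x).trans ?_
    have : 2 * (η / (2 * (‖v‖ + 1))) * ‖v‖ = η * (‖v‖ / (‖v‖ + 1)) := by field_simp
    rw [this]
    have h1 : ‖v‖ / (‖v‖ + 1) ≤ 1 := by
      rw [div_le_one (by positivity)]; linarith
    nlinarith
  | zero =>
    intro η hη
    exact ⟨∅, 1, one_pos, fun S _ _ x => by simp [avg, hη.le]⟩
  | add a b _ _ ha hb =>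
    intro η hη
    obtain ⟨K1, d1, hd1, h1⟩ := ha (η / 2) (by positivity)
    obtain ⟨K2, d2, hd2, h2⟩ := hb (η / 2) (by positivity)
    refine ⟨K1 ∪ K2, min d1 d2, lt_min hd1 hd2, fun S hS hF x => ?_⟩
    have e1 := h1 S hS (folner_mono Finset.subset_union_left (min_le_left _ _) hF) x
    have e2 := h2 S hS (folner_mono Finset.subset_union_right (min_le_right _ _) hF) x
    have : avg S (a + b : C(X, ℝ)) x = avg S a x + avg S b x := avg_add S a b x
    rw [this]
    have := abs_add_le (avg S a x) (avg S b x)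
    linarith
  | smul c a _ ha =>
    intro η hη
    obtain ⟨K, d, hd, h⟩ := ha (η / (|c| + 1)) (by positivity)
    refine ⟨K, d, hd, fun S hS hF x => ?_⟩
    have e := h S hS hF x
    have : avg S (c • a : C(X, ℝ)) x = c * avg S a x := avg_smul S c a x
    rw [this, abs_mul]
    rw [le_div_iff₀ (by positivity)] at e
    nlinarith [abs_nonneg c, abs_nonneg (avg S a x)]

theorem integral_avg_sq_le {G X : Type*} [Group G] [MetricSpace X] [CompactSpace X]
    [MeasurableSpace X] [BorelSpace X] [MulAction G X] [ContinuousConstSMul G X]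
    (ν : Measure X) [IsProbabilityMeasure ν] [SMulInvariantMeasure G X ν]
    {S : Finset G} (hS : S.Nonempty) {h : X → ℝ} (hh : Continuous h) :
    ∫ x, (avg S h x) ^ 2 ∂ν ≤ ∫ x, h x ^ 2 ∂ν := by
  have hcard : (0 : ℝ) < S.card := by exact_mod_cast hS.card_pos
  have h1 : ∀ x, (avg S h x) ^ 2 ≤ avg S (fun y => h y ^ 2) x := by
    intro x
    have := sq_sum_le_card_mul_sum_sq (s := S) (f := fun s => h (s • x))
    simp only [avg]
    rw [mul_pow, inv_pow, inv_mul_le_iff₀ (by positivity)]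
    calc _ ≤ _ := this
      _ = _ := by field_simp
  have h2 : ∫ x, avg S (fun y => h y ^ 2) x ∂ν = ∫ x, h x ^ 2 ∂ν := by
    simp only [avg]
    rw [integral_const_mul, integral_finsetSum _
      (fun s _ => integrable_cont (by fun_prop) ν)]
    simp only [integral_smul_eq ν _ (fun x => h x ^ 2), Finset.sum_const, nsmul_eq_mul]
    field_simp
  rw [← h2]
  exact integral_mono (integrable_cont ((continuous_avg S hh).pow 2) ν)
    (integrable_cont (continuous_avg S (by fun_prop)) ν) h1

theorem integral_sq_shift {X : Type*} [MetricSpace X] [CompactSpace X]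
    [MeasurableSpace X] [BorelSpace X]
    (ν : Measure X) [IsProbabilityMeasure ν] {h : X → ℝ} (hh : Continuous h) (c : ℝ) :
    ∫ x, (h x - c) ^ 2 ∂ν = ∫ x, h x ^ 2 ∂ν - 2 * c * ∫ x, h x ∂ν + c ^ 2 := by
  have : ∀ x, (h x - c) ^ 2 = h x ^ 2 - 2 * c * h x + c ^ 2 := fun x => by ring
  simp only [this]
  rw [integral_add (integrable_cont (by fun_prop) ν) (integrable_const _),
    integral_sub (integrable_cont (by fun_prop) ν) (integrable_cont (by fun_prop) ν),
    integral_const_mul]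
  simp

theorem uniform_mean_ergodic {G X : Type*} [Group G] [Countable G] [MetricSpace X] [CompactSpace X]
    [MeasurableSpace X] [BorelSpace X] [MulAction G X] [ContinuousConstSMul G X]
    (hcpt : IsCompact (EG G X)) (f : C(X, ℝ)) (η : ℝ) (hη : 0 < η) :
    ∃ (K : Finset G) (δ : ℝ), 0 < δ ∧ ∀ S : Finset G, S.Nonempty →
      FolnerInv G K δ S → ∀ ν ∈ EG G X,
        ∫ x, (avg S f x - ∫ y, f y ∂(ν : Measure X)) ^ 2 ∂(ν : Measure X) ≤ η := by
  classical
  let ψ : C(X, ℝ) → ProbabilityMeasure X → ℝ := fun u ν =>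
    ∫ x, (f x - u x) ^ 2 ∂(ν : Measure X) - (∫ x, f x ∂(ν : Measure X)) ^ 2
  have hψc : ∀ u, Continuous (ψ u) := fun u =>
    (continuous_integral_cont (⟨fun x => (f x - u x) ^ 2, by fun_prop⟩ : C(X, ℝ))).sub
      ((continuous_integral_cont f).pow 2)
  have hfu : ∀ ν ∈ EG G X, ∀ u ∈ cobSpan G X, ∀ c : ℝ,
      ∫ x, (f x - u x - c) ^ 2 ∂(ν : Measure X) =
        ψ u ν + (∫ x, f x ∂(ν : Measure X) - c) ^ 2 := by
    intro ν hν u hu c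
    have := smulInv_of_inv hν.1
    rw [integral_sq_shift (ν : Measure X) (h := fun x => f x - u x) (by fun_prop),
      integral_sub (integrable_cont (by fun_prop) _) (integrable_cont (by fun_prop) _),
      integral_cobSpan (G := G) _ hu]
    simp only [ψ]
    ring
  have hex : ∀ ν ∈ EG G X, ∃ u, u ∈ cobSpan G X ∧ ψ u ν < η / 4 := by
    intro ν hν
    obtain ⟨u, c, hu, h⟩ := exists_cob_approx hν f (η / 4) (by positivity)
    refine ⟨u, hu, ?_⟩
    have h1 := hfu ν hν u hu c
    have h2 : ∀ x, f x - c - u x = f x - u x - c := fun x => by ring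
    simp only [h2] at h
    nlinarith [sq_nonneg (∫ x, f x ∂(ν : Measure X) - c)]
  choose! U hU hUψ using hex
  obtain ⟨t, ht, hcov⟩ := hcpt.elim_nhds_subcover (fun ν => {ν' | ψ (U ν) ν' < η / 4})
    (fun ν hν => (isOpen_lt (hψc _) continuous_const).mem_nhds (hUψ ν hν))
  have hsmall : ∀ ν ∈ EG G X, ∃ (K : Finset G) (δ : ℝ), 0 < δ ∧ ∀ S : Finset G, S.Nonempty →
      FolnerInv G K δ S → ∀ x : X, |avg S (U ν) x| ≤ Real.sqrt (η / 4) := fun ν hν =>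
    avg_cobSpan (hU ν hν) _ (Real.sqrt_pos.2 (by positivity))
  choose! K d hd hKd using hsmall
  have hmin : ∃ δ : ℝ, 0 < δ ∧ ∀ ν ∈ t, δ ≤ d ν := by
    by_cases hne : t.Nonempty
    · obtain ⟨ν₀, h0, hm⟩ := t.exists_min_image d hne
      exact ⟨d ν₀, hd _ (ht _ h0), hm⟩
    · rw [Finset.not_nonempty_iff_eq_empty] at hne
      exact ⟨1, one_pos, by simp [hne]⟩
  obtain ⟨δ, hδ, hδd⟩ := hmin
  refine ⟨t.biUnion K, δ, hδ, fun S hS hF ν hν => ?_⟩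
  have := smulInv_of_inv hν.1
  obtain ⟨ν₁, hν₁, hlt⟩ := mem_iUnion₂.1 (hcov hν)
  have hlt' : ψ (U ν₁) ν < η / 4 := hlt
  have hsm := hKd ν₁ (ht _ hν₁) S hS
    (folner_mono (Finset.subset_biUnion_of_mem K hν₁) (hδd _ hν₁) hF)
  set m := ∫ y, f y ∂(ν : Measure X) with hm
  clear_value m
  set u := U ν₁ with hu
  have hfu' := hfu ν hν u (hU ν₁ (ht _ hν₁)) m
  rw [← hm, sub_self] at hfu'
  let h : X → ℝ := fun x => f x - u x - m
  have hhc : Continuous h := by fun_prop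
  have hdec : ∀ x, avg S f x - m = avg S h x + avg S u x := by
    intro x
    rw [← avg_add]
    have : (fun y => h y + u y) = fun y => f y + (-m) := by funext y; simp only [h]; ring
    rw [this, avg_add, avg_const hS]; ring
  have hpt : ∀ x, (avg S f x - m) ^ 2 ≤ 2 * (avg S h x) ^ 2 + 2 * (η / 4) := by
    intro x
    rw [hdec]
    have h1 : (avg S u x) ^ 2 ≤ η / 4 := by
      have := sq_le_sq' (by linarith [abs_le.1 (hsm x)]) (abs_le.1 (hsm x)).2
      rwa [Real.sq_sqrt (by positivity)] at this
    nlinarith [sq_nonneg (avg S h x - avg S u x)]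
  have hIntg := integral_avg_sq_le (ν : Measure X) hS hhc
  have hhint : ∫ x, h x ^ 2 ∂(ν : Measure X) = ψ u ν + 0 ^ 2 := hfu'
  calc ∫ x, (avg S f x - m) ^ 2 ∂(ν : Measure X)
      ≤ ∫ x, (2 * (avg S h x) ^ 2 + 2 * (η / 4)) ∂(ν : Measure X) :=
        integral_mono (integrable_cont (((continuous_avg S f.continuous).sub
          continuous_const).pow 2) _) (integrable_cont
          ((((continuous_avg S hhc).pow 2).const_mul 2).add continuous_const) _) hpt
    _ = 2 * ∫ x, (avg S h x) ^ 2 ∂(ν : Measure X) + 2 * (η / 4) := by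
        have hI : Integrable (fun x => 2 * (avg S h x) ^ 2) (ν : Measure X) :=
          integrable_cont (((continuous_avg S hhc).pow 2).const_mul 2) _
        rw [integral_add hI (integrable_const _), integral_const_mul]
        simp
    _ ≤ η := by linarith

theorem exists_separating_functions {X : Type*} [MetricSpace X] [CompactSpace X]
    [MeasurableSpace X] [BorelSpace X] (D : Set (ProbabilityMeasure X × ProbabilityMeasure X))
    (hD : IsCompact D) (hne : ∀ p ∈ D, p.1 ≠ p.2) :
    ∃ (Λ : Finset C(X, ℝ)) (γ : ℝ), 0 < γ ∧ ∀ p ∈ D,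
      γ ≤ ∑ f ∈ Λ, |∫ x, f x ∂(p.1 : Measure X) - ∫ x, f x ∂(p.2 : Measure X)| := by
  classical
  have hex : ∀ p ∈ D, ∃ f : C(X, ℝ),
      ∫ x, f x ∂(p.1 : Measure X) ≠ ∫ x, f x ∂(p.2 : Measure X) := by
    intro p hp
    by_contra hcon
    push Not at hcon
    exact hne p hp (pm_ext hcon)
  choose! f hf using hex
  have hc : ∀ f : C(X, ℝ), Continuous (fun p : ProbabilityMeasure X × ProbabilityMeasure X =>
      |∫ x, f x ∂(p.1 : Measure X) - ∫ x, f x ∂(p.2 : Measure X)|) := fun f =>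
    (((continuous_integral_cont f).comp continuous_fst).sub
      ((continuous_integral_cont f).comp continuous_snd)).abs
  obtain ⟨t, ht, hcov⟩ := hD.elim_nhds_subcover
    (fun p => {q | 0 < |∫ x, f p x ∂(q.1 : Measure X) - ∫ x, f p x ∂(q.2 : Measure X)|})
    (fun p hp => (isOpen_lt continuous_const (hc _)).mem_nhds
      (abs_pos.2 (sub_ne_zero.2 (hf p hp))))
  by_cases hDne : D.Nonempty
  · obtain ⟨p₀, hp₀, hmin⟩ := hD.exists_isMinOn hDne
      (f := fun p => ∑ f ∈ t.image f,
        |∫ x, f x ∂(p.1 : Measure X) - ∫ x, f x ∂(p.2 : Measure X)|)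
      (continuous_finsetSum _ fun f _ => hc f).continuousOn
    refine ⟨t.image f, _, ?_, fun p hp => hmin hp⟩
    obtain ⟨q, hq, hpos⟩ := mem_iUnion₂.1 (hcov hp₀)
    exact Finset.sum_pos' (fun _ _ => abs_nonneg _) ⟨f q, Finset.mem_image_of_mem f hq, hpos⟩
  · rw [not_nonempty_iff_eq_empty] at hDne
    exact ⟨∅, 1, one_pos, by simp [hDne]⟩

theorem exists_common_folner {G ι : Type*} [Group G] (hG : AmenableGroup G)
    (Λ : Finset ι) (P : ι → Finset G → Prop)
    (h : ∀ f ∈ Λ, ∃ (K : Finset G) (δ : ℝ), 0 < δ ∧ ∀ S : Finset G, S.Nonempty →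
      FolnerInv G K δ S → P f S) : ∃ S : Finset G, S.Nonempty ∧ ∀ f ∈ Λ, P f S := by
  classical
  choose! K d hd hP using h
  have hmin : ∃ δ : ℝ, 0 < δ ∧ ∀ f ∈ Λ, δ ≤ d f := by
    by_cases hne : Λ.Nonempty
    · obtain ⟨ν₀, h0, hm⟩ := Λ.exists_min_image d hne
      exact ⟨d ν₀, hd _ h0, hm⟩
    · rw [Finset.not_nonempty_iff_eq_empty] at hne
      exact ⟨1, one_pos, by simp [hne]⟩
  obtain ⟨δ, hδ, hδd⟩ := hmin
  obtain ⟨S, hS, hF⟩ := hG (Λ.biUnion K) δ hδ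
  exact ⟨S, hS, fun f hf => hP f hf S hS
    (folner_mono (Finset.subset_biUnion_of_mem K hf) (hδd _ hf) hF)⟩

theorem exists_separating_open {G X ι : Type*} [Group G] [Countable G] [MetricSpace X]
    [CompactSpace X] [MeasurableSpace X] [BorelSpace X] [MulAction G X] [ContinuousConstSMul G X]
    [Finite ι] (hG : AmenableGroup G)
    (hcpt : IsCompact (EG G X)) (E : ι → Set (ProbabilityMeasure X))
    (hsub : ∀ i, E i ⊆ EG G X) (hEc : ∀ i, IsCompact (E i))
    (hdisj : ∀ i j, i ≠ j → Disjoint (E i) (E j)) (η : ℝ) (hη : 0 < η) :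
    ∃ W : ι → Set X, (∀ i, IsOpen (W i)) ∧ (∀ i j, i ≠ j → Disjoint (W i) (W j)) ∧
      ∀ i, ∀ ν ∈ E i, (ν : Measure X).real (W i)ᶜ ≤ η := by
  classical
  obtain ⟨Λ, γ, hγ, hsep⟩ := exists_separating_functions
    (⋃ p : {p : ι × ι // p.1 ≠ p.2}, E p.1.1 ×ˢ E p.1.2)
    (isCompact_iUnion fun p => (hEc _).prod (hEc _)) (by
      intro q hq heq
      obtain ⟨p, hp⟩ := mem_iUnion.1 hq
      exact Set.disjoint_left.1 (hdisj _ _ p.2) hp.1 (heq ▸ hp.2))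
  set η' : ℝ := η * (γ / 2) ^ 2 / ((Λ.card : ℝ) ^ 2 + 1) with hη'
  have hη'0 : 0 < η' := by positivity
  obtain ⟨S, hS, hall⟩ := exists_common_folner hG Λ (fun f S => ∀ ν ∈ EG G X,
      ∫ x, (avg S f x - ∫ y, f y ∂(ν : Measure X)) ^ 2 ∂(ν : Measure X) ≤ η')
    (fun f _ => uniform_mean_ergodic hcpt f η' hη'0)
  let dev : ProbabilityMeasure X → X → ℝ := fun ν x =>
    ∑ f ∈ Λ, |avg S f x - ∫ y, f y ∂(ν : Measure X)|
  have hdevc : ∀ ν, Continuous (dev ν) := fun ν =>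
    continuous_finsetSum _ fun f _ => ((continuous_avg S f.continuous).sub continuous_const).abs
  refine ⟨fun i => ⋃ ν ∈ E i, {x | dev ν x < γ / 2}, fun i => ?_, fun i j hij => ?_,
    fun i ν hν => ?_⟩
  · exact isOpen_biUnion fun ν _ => isOpen_lt (hdevc ν) continuous_const
  · rw [Set.disjoint_left]
    intro x hx hx'
    obtain ⟨ν, hν, h1⟩ := mem_iUnion₂.1 hx
    obtain ⟨ν', hν', h2⟩ := mem_iUnion₂.1 hx'
    have h1' : dev ν x < γ / 2 := h1
    have h2' : dev ν' x < γ / 2 := h2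
    have h3 := hsep (ν, ν') (mem_iUnion.2 ⟨⟨(i, j), hij⟩, hν, hν'⟩)
    have h4 : ∑ f ∈ Λ, |∫ x, f x ∂(ν : Measure X) - ∫ x, f x ∂(ν' : Measure X)| ≤
        dev ν x + dev ν' x := by
      simp only [dev]
      rw [← Finset.sum_add_distrib]
      refine Finset.sum_le_sum fun f _ => ?_
      rw [abs_sub_comm (avg S f x) (∫ y, f y ∂(ν : Measure X))]
      exact abs_sub_le _ _ _
    linarith
  · have hsub' : (⋃ ν ∈ E i, {x | dev ν x < γ / 2})ᶜ ⊆ {x | (γ / 2) ^ 2 ≤ dev ν x ^ 2} := by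
      intro x hx
      have : ¬ dev ν x < γ / 2 := fun h => hx (mem_iUnion₂.2 ⟨ν, hν, h⟩)
      have h := not_lt.1 this
      exact pow_le_pow_left₀ (by positivity) h 2
    have hch := mul_meas_ge_le_integral_of_nonneg (μ := (ν : Measure X))
      (f := fun x => dev ν x ^ 2) (Filter.Eventually.of_forall fun x => sq_nonneg _)
      (integrable_cont ((hdevc ν).pow 2) _) ((γ / 2) ^ 2)
    have hIntg : ∫ x, dev ν x ^ 2 ∂(ν : Measure X) ≤ Λ.card * (Λ.card * η') := by
      have hfi : ∀ f ∈ Λ, Integrable (fun x => (avg S f x - ∫ y, f y ∂(ν : Measure X)) ^ 2)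
          (ν : Measure X) := fun f _ =>
        integrable_cont (((continuous_avg S f.continuous).sub continuous_const).pow 2) _
      calc ∫ x, dev ν x ^ 2 ∂(ν : Measure X)
          ≤ ∫ x, (Λ.card : ℝ) * ∑ f ∈ Λ, (avg S f x - ∫ y, f y ∂(ν : Measure X)) ^ 2
              ∂(ν : Measure X) := by
            refine integral_mono (integrable_cont ((hdevc ν).pow 2) _)
              ((integrable_finsetSum _ hfi).const_mul _) fun x => ?_
            have := sq_sum_le_card_mul_sum_sq (s := Λ)
              (f := fun f => |avg S f x - ∫ y, f y ∂(ν : Measure X)|)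
            simpa only [sq_abs] using this
        _ = (Λ.card : ℝ) * ∑ f ∈ Λ, ∫ x, (avg S f x - ∫ y, f y ∂(ν : Measure X)) ^ 2
              ∂(ν : Measure X) := by
            rw [integral_const_mul, integral_finsetSum _ hfi]
        _ ≤ Λ.card * (Λ.card * η') := by
            gcongr
            refine (Finset.sum_le_card_nsmul _ _ η' fun f hf => hall f hf ν (hsub i hν)).trans ?_
            rw [nsmul_eq_mul]
    have hfin : (Λ.card : ℝ) * (Λ.card * η') ≤ η * (γ / 2) ^ 2 := by
      have : ((Λ.card : ℝ) ^ 2 + 1) * η' = η * (γ / 2) ^ 2 := by rw [hη']; field_simp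
      nlinarith
    have hpos : 0 < (γ / 2) ^ 2 := by positivity
    have h5 : (γ / 2) ^ 2 * (ν : Measure X).real {x | (γ / 2) ^ 2 ≤ dev ν x ^ 2} ≤
        (γ / 2) ^ 2 * η := by linarith
    exact (measureReal_mono hsub' (measure_ne_top _ _)).trans (le_of_mul_le_mul_left h5 hpos)

theorem exists_compact_partition {α : Type*} [TopologicalSpace α] [T2Space α] {Y : Set α}
    (hc : IsCompact Y) (htd : IsTotallyDisconnected Y) (O : α → Set α)
    (hO : ∀ y ∈ Y, IsOpen (O y) ∧ y ∈ O y) :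
    ∃ (n : ℕ) (E : Fin n → Set α) (y : Fin n → α), (∀ i, y i ∈ Y) ∧ (∀ i, E i ⊆ Y) ∧
      (∀ i, E i ⊆ O (y i)) ∧ (∀ i, IsCompact (E i)) ∧ (∀ i j, i ≠ j → Disjoint (E i) (E j)) ∧
      Y ⊆ ⋃ i, E i := by
  classical
  have : CompactSpace Y := isCompact_iff_compactSpace.1 hc
  have : TotallyDisconnectedSpace Y := (totallyDisconnectedSpace_subtype_iff).2 htd
  have hex : ∀ y : Y, ∃ Z : Set Y, IsClopen Z ∧ y ∈ Z ∧ Z ⊆ Subtype.val ⁻¹' (O y) := fun y =>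
    compact_exists_isClopen_in_isOpen ((hO y y.2).1.preimage continuous_subtype_val) (hO y y.2).2
  choose Z hZ hyZ hZO using hex
  obtain ⟨t, -, hcov⟩ := isCompact_univ.elim_nhds_subcover Z
    (fun y _ => (hZ y).isOpen.mem_nhds (hyZ y))
  let e : Fin t.card ≃ t := t.equivFin.symm
  let E' : Fin t.card → Set Y := fun i => Z (e i) ∩ ⋂ j : {j // j < i}, (Z (e j.1))ᶜ
  have hE'c : ∀ i, IsClosed (E' i) := fun i =>
    (hZ _).isClosed.inter (isClosed_iInter fun j => (hZ _).isOpen.isClosed_compl)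
  refine ⟨t.card, fun i => Subtype.val '' E' i, fun i => (e i).1.1, fun i => (e i).1.2,
    fun i => ?_, fun i => ?_, fun i => ?_, fun i j hij => ?_, fun y hy => ?_⟩
  · rintro _ ⟨y, -, rfl⟩; exact y.2
  · rintro _ ⟨y, hy, rfl⟩; exact hZO _ hy.1
  · exact (hE'c i).isCompact.image continuous_subtype_val
  · rw [Set.disjoint_left]
    rintro _ ⟨y, hy, rfl⟩ ⟨y', hy', heq⟩
    have : y' = y := Subtype.ext heq
    subst this
    rcases lt_or_gt_of_ne hij with h | h
    · exact mem_iInter.1 hy'.2 ⟨i, h⟩ hy.1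
    · exact mem_iInter.1 hy.2 ⟨j, h⟩ hy'.1
  · obtain ⟨z, hz, hyz⟩ := mem_iUnion₂.1 (hcov (mem_univ (⟨y, hy⟩ : Y)))
    obtain ⟨i, hi, hmin⟩ := WellFounded.has_min (wellFounded_lt (α := Fin t.card))
      {i | (⟨y, hy⟩ : Y) ∈ Z (e i)} ⟨e.symm ⟨z, hz⟩, by simpa using hyz⟩
    exact mem_iUnion.2 ⟨i, ⟨y, hy⟩, ⟨hi, mem_iInter.2 fun j hj => hmin j.1 hj j.2⟩, rfl⟩

theorem combine_castles {G X : Type*} [Group G] [MetricSpace X] [CompactSpace X]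
    [MulAction G X] [ContinuousConstSMul G X]
    {n : ℕ} {N : Fin n → ℕ} {F : Finset G} {δ : ℝ} (T : ∀ i, Fin (N i) → Finset G)
    (V : ∀ i, Fin (N i) → Set X) (hT : ∀ i, OpenCastle F δ (T i) (V i)) (W : Fin n → Set X)
    (hWo : ∀ i, IsOpen (W i)) (hWd : ∀ i j, i ≠ j → Disjoint (W i) (W j)) :
    OpenCastle F δ (fun p : (i : Fin n) × Fin (N i) => T p.1 p.2)
      (fun p : (i : Fin n) × Fin (N i) => V p.1 p.2 ∩ ⋂ t ∈ T p.1 p.2, (fun x => t • x) ⁻¹' W p.1)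
    where
  op p := ((hT p.1).op p.2).inter
    (isOpen_biInter_finset fun t _ => (hWo p.1).preimage (continuous_const_smul t))
  disj := by
    rintro ⟨i, a⟩ ⟨j, b⟩ s hs t ht x hx y hy hxy
    have h1 : s • x ∈ W i := mem_iInter₂.1 hx.2 s hs
    have h2 : t • y ∈ W j := mem_iInter₂.1 hy.2 t ht
    have hij : i = j := by
      by_contra hij
      exact Set.disjoint_left.1 (hWd i j hij) h1 (hxy ▸ h2)
    subst hij
    obtain ⟨rfl, rfl⟩ := (hT i).disj a b s hs t ht x hx.1 y hy.1 hxy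
    exact ⟨rfl, rfl⟩
  fol p := (hT p.1).fol p.2
  diam p t ht := lt_of_le_of_lt
    (Metric.diam_mono (smul_set_mono inter_subset_left)
      (isCompact_univ.isBounded.subset (subset_univ _)))
    ((hT p.1).diam p.2 t ht)

theorem combine_measure {G X : Type*} [Group G] [MetricSpace X] [CompactSpace X]
    [MeasurableSpace X] [BorelSpace X] [MulAction G X] [ContinuousConstSMul G X]
    {n : ℕ} {N : Fin n → ℕ} (T : ∀ i, Fin (N i) → Finset G)
    (V : ∀ i, Fin (N i) → Set X) (W : Fin n → Set X)
    (ν : Measure X) [IsProbabilityMeasure ν] [SMulInvariantMeasure G X ν] (i : Fin n) (η : ℝ)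
    (hW : ν.real (W i)ᶜ ≤ η) :
    ν.real (castleUnion (fun p : (i : Fin n) × Fin (N i) => T p.1 p.2)
      (fun p : (i : Fin n) × Fin (N i) =>
        V p.1 p.2 ∩ ⋂ t ∈ T p.1 p.2, (fun x => t • x) ⁻¹' W p.1))ᶜ ≤
      ν.real (castleUnion (T i) (V i))ᶜ + (∑ a, ((T i a).card : ℝ) ^ 2) * η := by
  have hsub : (castleUnion (fun p : (i : Fin n) × Fin (N i) => T p.1 p.2)
      (fun p : (i : Fin n) × Fin (N i) =>
        V p.1 p.2 ∩ ⋂ t ∈ T p.1 p.2, (fun x => t • x) ⁻¹' W p.1))ᶜ ⊆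
      (castleUnion (T i) (V i))ᶜ ∪ ⋃ a ∈ (Finset.univ : Finset (Fin (N i))),
        ⋃ t ∈ T i a, ⋃ s ∈ T i a, (t * s⁻¹) • (W i)ᶜ := by
    intro x hx
    by_cases hxU : x ∈ castleUnion (T i) (V i)
    · right
      obtain ⟨a, t, ht, y, hy, rfl⟩ := mem_castleUnion.1 hxU
      have : ∃ s ∈ T i a, s • y ∉ W i := by
        by_contra hcon
        push Not at hcon
        exact hx (mem_castleUnion.2 ⟨⟨i, a⟩, t, ht, y, ⟨hy, mem_iInter₂.2 hcon⟩, rfl⟩)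
      obtain ⟨s, hs, hsy⟩ := this
      refine mem_iUnion₂.2 ⟨a, Finset.mem_univ _, mem_iUnion₂.2 ⟨t, ht, mem_iUnion₂.2 ⟨s, hs, ?_⟩⟩⟩
      exact ⟨s • y, hsy, by simp [mul_smul]⟩
    · exact Or.inl hxU
  refine (measureReal_mono hsub (measure_ne_top _ _)).trans ?_
  refine (measureReal_union_le _ _).trans (add_le_add le_rfl ?_)
  refine (measureReal_biUnion_finset_le _ _).trans ?_
  rw [Finset.sum_mul]
  refine Finset.sum_le_sum fun a _ => ?_
  have h1 : ∀ t ∈ T i a, ν.real (⋃ s ∈ T i a, (t * s⁻¹) • (W i)ᶜ) ≤ (T i a).card * η := by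
    intro t _
    refine (measureReal_biUnion_finset_le _ _).trans ?_
    refine (Finset.sum_le_card_nsmul _ _ η fun s _ => ?_).trans (by rw [nsmul_eq_mul])
    have : ν.real ((t * s⁻¹) • (W i)ᶜ) = ν.real (W i)ᶜ :=
      congrArg ENNReal.toReal (measure_smul ν (t * s⁻¹) _)
    rw [this]; exact hW
  refine (measureReal_biUnion_finset_le _ _).trans ?_
  refine (Finset.sum_le_card_nsmul _ _ _ h1).trans ?_
  rw [nsmul_eq_mul]
  exact le_of_eq (by ring)

theorem exists_castle_all {G X : Type*} [Group G] [Countable G] [MetricSpace X] [CompactSpace X]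
    [MeasurableSpace X] [BorelSpace X] [MulAction G X] [ContinuousConstSMul G X]
    (hG : AmenableGroup G) (hfree : FreeAction G X)
    (hcpt : IsCompact (EG G X)) (hzd : IsTotallyDisconnected (EG G X))
    (F : Finset G) (ε δ : ℝ) (hε : 0 < ε) (hδ : 0 < δ) :
    ∃ (n : ℕ) (T : Fin n → Finset G) (V : Fin n → Set X), OpenCastle F δ T V ∧
      ∀ μ ∈ MG G X, (μ : Measure X).real (castleUnion T V)ᶜ ≤ ε / 2 := by
  classical
  have hex : ∀ ν ∈ EG G X, ∃ (n : ℕ) (T : Fin n → Finset G) (V : Fin n → Set X),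
      OpenCastle F δ T V ∧ (ν : Measure X).real (castleUnion T V)ᶜ < ε / 4 := by
    intro ν hν
    have := smulInv_of_inv hν.1
    exact exists_openCastle hG hfree (ν : Measure X) F δ hδ (ε / 4) (by positivity)
  choose! N₀ T₀ V₀ hcas hmeas using hex
  obtain ⟨n, E, y, hyE, hEsub, hEO, hEc, hEd, hcov⟩ := exists_compact_partition hcpt hzd
    (fun ν => {ν' : ProbabilityMeasure X | (ν' : Measure X).real (castleUnion (T₀ ν) (V₀ ν))ᶜ < ε / 4})
    (fun ν hν => ⟨isOpen_measure_closed_lt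
      (isOpen_castleUnion (hcas ν hν).op).isClosed_compl _, hmeas ν hν⟩)
  let T : ∀ i, Fin (N₀ (y i)) → Finset G := fun i => T₀ (y i)
  let V : ∀ i, Fin (N₀ (y i)) → Set X := fun i => V₀ (y i)
  set Q : ℝ := ∑ i, ∑ a, ((T i a).card : ℝ) ^ 2 with hQ
  have hQ0 : 0 ≤ Q := Finset.sum_nonneg fun i _ => Finset.sum_nonneg fun a _ => sq_nonneg _
  have hQi : ∀ i, ∑ a, ((T i a).card : ℝ) ^ 2 ≤ Q := fun i =>
    Finset.single_le_sum (f := fun i => ∑ a, ((T i a).card : ℝ) ^ 2)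
      (fun i _ => Finset.sum_nonneg fun a _ => sq_nonneg _) (Finset.mem_univ i)
  clear_value Q
  set η : ℝ := ε / (4 * (Q + 1)) with hη
  have hη0 : 0 < η := by positivity
  have hQη : Q * η ≤ ε / 4 := by
    have : (Q + 1) * η = ε / 4 := by rw [hη]; field_simp
    linarith
  clear_value η
  obtain ⟨W, hWo, hWd, hWm⟩ := exists_separating_open hG hcpt E hEsub hEc hEd η hη0
  have hC := combine_castles T V (fun i => hcas (y i) (hyE i)) W hWo hWd
  let f := (Fintype.equivFin ((i : Fin n) × Fin (N₀ (y i)))).symm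
  refine ⟨_, _, _, hC.comp f, ?_⟩
  rw [castleUnion_comp]
  refine measure_le_of_ergodic (isOpen_castleUnion hC.op).isClosed_compl _ fun ν hν => ?_
  have := smulInv_of_inv hν.1
  obtain ⟨i, hi⟩ := mem_iUnion.1 (hcov hν)
  have h1 := combine_measure T V W (ν : Measure X) i η (hWm i ν hi)
  have h2 : (ν : Measure X).real (castleUnion (T i) (V i))ᶜ < ε / 4 := hEO i hi
  have h3 : (∑ a, ((T i a).card : ℝ) ^ 2) * η ≤ Q * η := by
    gcongr
    exact hQi i
  linarith

end CastleProof

/-- "almost finiteness in measure": if `E_G(X)` is compact and zero-dimensional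
then for every finite `F ⊆ G` and `ε, δ > 0` there is an open castle `{(T_i, V_i)}` with
`(F,δ)`-invariant shapes, levels of diameter `< δ`, and
`μ(X \ ⊔_i T_i · V_i) < ε` for all `μ ∈ M_G(X)`. -/
theorem exists_open_castle_almost_covering
    {G X : Type*} [Group G] [Countable G] [Infinite G]
    [MetricSpace X] [CompactSpace X] [Infinite X]
    [MeasurableSpace X] [BorelSpace X]
    [MulAction G X] [ContinuousConstSMul G X]
    (hG : AmenableGroup G)
    (hfree : FreeAction G X) (hmin : MinimalAction G X)
    (hcpt : IsCompact (EG G X)) (hzd : IsTotallyDisconnected (EG G X))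
    (F : Finset G) (ε δ : ℝ) (hε : 0 < ε) (hδ : 0 < δ) :
    ∃ (I : ℕ) (T : Fin I → Finset G) (V : Fin I → Set X),
      (∀ i, IsOpen (V i)) ∧
      (∀ i, IsTower G X (T i) (V i)) ∧
      (∀ i j, i ≠ j → Disjoint ((T i : Set G) • V i) ((T j : Set G) • V j)) ∧
      (∀ i, FolnerInv G F δ (T i)) ∧
      (∀ i, ∀ t ∈ T i, Metric.diam (t • V i) < δ) ∧
      ∀ μ ∈ MG G X, (μ (Set.univ \ ⋃ i, (T i : Set G) • V i) : ℝ) < ε := by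
  obtain ⟨n, T, V, hC, hm⟩ := exists_castle_all hG hfree hcpt hzd F ε δ hε hδ
  refine ⟨n, T, V, hC.op, fun i => ?_, fun i j hij => ?_, hC.fol, hC.diam, fun μ hμ => ?_⟩
  · intro s hs t ht hst
    rw [Set.disjoint_left]
    rintro _ ⟨x, hx, rfl⟩ ⟨y, hy, hxy⟩
    exact hst (hC.disj i i s hs t ht x hx y hy hxy.symm).2
  · rw [Set.disjoint_left]
    rintro _ ⟨s, hs, x, hx, rfl⟩ ⟨t, ht, y, hy, hxy⟩
    exact hij (hC.disj i j s hs t ht x hx y hy hxy.symm).1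
  · have h := hm μ hμ
    rw [← compl_eq_univ_sdiff]
    have h' : (μ (⋃ i, (T i : Set G) • V i)ᶜ : ℝ) ≤ ε / 2 := h
    linarith
end
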